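/- arXiv:math/9205206 — 2 statements merged into one kernel-verified Lean document; each statement's English description precedes it below -/
import Mathlib

section
/- Let ‖·‖_X be an admissible extended-value quasinorm on the Borel functions of a compact Hausdorff space Ω which is p-normable (‖f + g‖_X^p ≤ ‖f‖_X^p + ‖g‖_X^p for all f, g) and satisfies a crude lower q-estimate for some q < ∞. Then there is a finite Borel measure μ on Ω such that for every Borel function f, ‖f‖_X = 0 if and only if f = 0 μ-almost everywhere. -/
open Set Filter Topology MeasureTheory ENNReal

/-- An admissible extended-value quasinorm on the Borel functions of `Ω`. -/
structure AdmissibleQuasinorm (Ω : Type*) [TopologicalSpace Ω] [MeasurableSpace Ω] where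
  N : (Ω → ℝ) → ℝ≥0∞
  mono : ∀ f g : Ω → ℝ, Measurable f → Measurable g →
    (∀ x, |f x| ≤ |g x|) → N f ≤ N g
  smul : ∀ (α : ℝ) (f : Ω → ℝ), Measurable f →
    N (fun x => α * f x) = ENNReal.ofReal |α| * N f
  quasi : ∃ C : ℝ≥0∞, ∀ f g : Ω → ℝ, Measurable f → Measurable g →
    (∀ x, 0 ≤ f x) → (∀ x, 0 ≤ g x) → (∀ x, f x = 0 ∨ g x = 0) →
    N (fun x => f x + g x) ≤ C * (N f + N g)
  exists_pos : ∃ u : Ω → ℝ, Measurable u ∧ (∀ x, 0 < u x) ∧ 0 < N u ∧ N u < ⊤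
  (cont : ∀ (f : ℕ → Ω → ℝ) (g : Ω → ℝ), (∀ n, Measurable (f n)) → Measurable g →
    (∀ n x, 0 ≤ f n x) → (∀ n x, f n x ≤ f (n + 1) x) →
    (∀ x, Tendsto (fun n => f n x) atTop (𝓝 (g x))) →
    Tendsto (fun n => N (f n)) atTop (𝓝 (N g)))

/-- `f₁, …, fₙ` are disjointly supported. -/
def DisjSupp {Ω : Type*} {n : ℕ} (f : Fin n → Ω → ℝ) : Prop :=
  ∀ i j, i ≠ j → ∀ x, f i x = 0 ∨ f j x = 0

/-- A crude upper `p`-estimate with constant `a`. -/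
def CrudeUpper {Ω : Type*} [TopologicalSpace Ω] [MeasurableSpace Ω]
    (X : AdmissibleQuasinorm Ω) (p a : ℝ) : Prop :=
  ∀ (n : ℕ) (f : Fin n → Ω → ℝ), (∀ i, Measurable (f i)) → DisjSupp f →
    X.N (fun x => ∑ i, f i x) ≤ ENNReal.ofReal a * (∑ i, X.N (f i) ^ p) ^ (1 / p)

/-- A crude lower `q`-estimate with constant `b`. -/
def CrudeLower {Ω : Type*} [TopologicalSpace Ω] [MeasurableSpace Ω]
    (X : AdmissibleQuasinorm Ω) (q b : ℝ) : Prop :=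
  ∀ (n : ℕ) (f : Fin n → Ω → ℝ), (∀ i, Measurable (f i)) → DisjSupp f →
    (∑ i, X.N (f i) ^ q) ^ (1 / q) ≤ ENNReal.ofReal b * X.N (fun x => ∑ i, f i x)

/-! Fix `u > 0` with `0 < ‖u‖ < ∞` and put `ψ A = ‖1_A u‖`. This is a quasi-submeasure, which the
lower estimate makes uniformly exhaustive: of any `m` disjoint sets, one has size less than a given
`η > 0`. Following Kalton and Roberts, a random bipartite graph of degree three from `P * m` to `P`
vertices has, by Hall's theorem, a matching of every set of at most `P / (27 * m)` vertices. Repeat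
each of `P` given sets `m` times. If no point lies in more than `P / (27 * m)` of these copies, then
matching at each point the copies which contain it cuts every copy into three pieces, labelled by
`P` labels in all, such that pieces of different copies with the same label are disjoint. If all the
sets had size at least `ε`, each copy would have a piece of size at least a fixed multiple `η` of
`ε`, and `m` of these pieces would share a label, which is impossible. Hence the sets with `ψ A ≥ ε`
have positive intersection number, and Kelley's theorem yields a finitely additive probability
bounded below on them. Its countably additive part `μ_ε` satisfies `μ_ε A = 0 → ψ A ≤ ε`. A finite
measure equivalent to `∑ n, μ_{1/n}`, restricted to the complement of a maximal `ψ`-null set, has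
the same null sets as `ψ`. -/

open Function
open scoped Finset NNReal

section Concentrator

lemma choose_mul_pow_self_le (n k : ℕ) : n.choose k * k ^ k ≤ 3 ^ k * n ^ k := by
  have pow_self_le : (k : ℝ) ^ k ≤ 3 ^ k * k.factorial := by
    rw [← div_le_iff₀ (by positivity)]
    calc (k : ℝ) ^ k / k.factorial ≤ Real.exp k :=
          Real.pow_div_factorial_le_exp _ k.cast_nonneg k
      _ = Real.exp 1 ^ k := by rw [← Real.exp_nat_mul, mul_one]
      _ ≤ 3 ^ k := by gcongr; exact Real.exp_one_lt_three.le
  calc n.choose k * k ^ k ≤ n.choose k * (3 ^ k * k.factorial) := by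
        gcongr; exact_mod_cast pow_self_le
    _ = 3 ^ k * n.descFactorial k := by rw [Nat.descFactorial_eq_factorial_mul_choose]; ring
    _ ≤ 3 ^ k * n ^ k := by gcongr; exact Nat.descFactorial_le_pow n k

lemma three_pow_mul_choose_mul_choose_le {N P k : ℕ} (h : 27 * N * k ≤ P ^ 2) :
    3 ^ k * (N.choose k * P.choose k * (k ^ 3) ^ k) ≤ (P ^ 3) ^ k :=
  calc 3 ^ k * (N.choose k * P.choose k * (k ^ 3) ^ k)
      = 3 ^ k * ((N.choose k * k ^ k) * (P.choose k * k ^ k) * k ^ k) := by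
        rw [← pow_mul, mul_comm 3 k, pow_mul]; ring
    _ ≤ 3 ^ k * ((3 ^ k * N ^ k) * (3 ^ k * P ^ k) * k ^ k) := by
        gcongr 3 ^ k * (?_ * ?_ * k ^ k) <;> exact choose_mul_pow_self_le _ _
    _ = (27 * N * k * P) ^ k := by simp only [← mul_pow]; congr 1; ring
    _ ≤ (P ^ 2 * P) ^ k := by gcongr
    _ = (P ^ 3) ^ k := by rw [← pow_succ]

variable {ι κ : Type*}

/-- The vertices of `κ` joined to some vertex of `I` in the bipartite multigraph of degree `3` in
which `i : ι` is joined to `g i 0`, `g i 1` and `g i 2`. -/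
def neighbors [DecidableEq κ] (g : ι → Fin 3 → κ) (I : Finset ι) : Finset κ :=
  I.biUnion fun i => Finset.univ.image (g i)

/-- A *concentrator* of degree `3`, after Kalton and Roberts: every set of at most `K` vertices of
`ι` can be matched into `κ`, a matching choosing for each vertex one of its three edges. -/
def IsConcentrator (g : ι → Fin 3 → κ) (K : ℕ) : Prop :=
  ∀ I : Finset ι, #I ≤ K → ∃ F : ι → Fin 3, InjOn (fun i => g i (F i)) I

variable [Fintype ι] [Fintype κ]

lemma card_piFinset_ite_mem [DecidableEq ι] {β : Type*} [Fintype β] (I : Finset ι) (S : Finset β) :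
    #(Fintype.piFinset fun i => if i ∈ I then S else Finset.univ) =
      #S ^ #I * Fintype.card β ^ (Fintype.card ι - #I) := by
  simp only [Fintype.card_piFinset, apply_ite Finset.card, Finset.prod_ite, Finset.prod_const,
    Finset.filter_univ_mem, Finset.filter_notMem_eq_sdiff, Finset.card_univ,
    ← Finset.compl_eq_univ_sdiff, Finset.card_compl]

lemma three_pow_mul_card_filter_neighbors_lt_le [DecidableEq ι] [DecidableEq κ] {k : ℕ}
    (hk : k ≤ Fintype.card ι) (h : 27 * Fintype.card ι * k ≤ Fintype.card κ ^ 2) :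
    3 ^ k * #{g : ι → Fin 3 → κ | ∃ I : Finset ι, #I = k ∧ #(neighbors g I) < k} ≤
      Fintype.card (ι → Fin 3 → κ) := by
  set N := Fintype.card ι
  set P := Fintype.card κ
  have hkP : k ≤ P := by nlinarith
  let confined (I : Finset ι) (J : Finset κ) : Finset (ι → Fin 3 → κ) :=
    Fintype.piFinset fun i => if i ∈ I then Fintype.piFinset fun _ => J else Finset.univ
  have cover : ({g : ι → Fin 3 → κ | ∃ I : Finset ι, #I = k ∧ #(neighbors g I) < k} : Finset _) ⊆
      (Finset.univ.powersetCard k ×ˢ Finset.univ.powersetCard k).biUnion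
        fun IJ => confined IJ.1 IJ.2 := by
    intro g hg
    obtain ⟨I, hI, hlt⟩ := (Finset.mem_filter.1 hg).2
    obtain ⟨J, hIJ, hJ⟩ := Finset.exists_superset_card_eq hlt.le hkP
    simp only [Finset.mem_biUnion, Finset.mem_product, Finset.mem_powersetCard_univ]
    refine ⟨(I, J), ⟨hI, hJ⟩, Fintype.mem_piFinset.2 fun i => ?_⟩
    split_ifs with hi
    · exact Fintype.mem_piFinset.2 fun a => hIJ <| Finset.mem_biUnion.2
        ⟨i, hi, Finset.mem_image_of_mem _ (Finset.mem_univ a)⟩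
    · exact Finset.mem_univ _
  have card_confined : ∀ IJ ∈ Finset.univ.powersetCard k ×ˢ Finset.univ.powersetCard k,
      #(confined IJ.1 IJ.2) ≤ (k ^ 3) ^ k * (P ^ 3) ^ (N - k) := by
    rintro ⟨I, J⟩ hIJ
    simp only [Finset.mem_product, Finset.mem_powersetCard_univ] at hIJ
    rw [card_piFinset_ite_mem]
    simp [hIJ, N, P]
  calc 3 ^ k * #{g : ι → Fin 3 → κ | ∃ I : Finset ι, #I = k ∧ #(neighbors g I) < k}
      ≤ 3 ^ k * (N.choose k * P.choose k * ((k ^ 3) ^ k * (P ^ 3) ^ (N - k))) := by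
        gcongr
        refine (Finset.card_le_card cover).trans
          ((Finset.card_biUnion_le_card_mul _ _ _ card_confined).trans_eq ?_)
        simp [N, P]
    _ = 3 ^ k * (N.choose k * P.choose k * (k ^ 3) ^ k) * (P ^ 3) ^ (N - k) := by ring
    _ ≤ (P ^ 3) ^ k * (P ^ 3) ^ (N - k) := by
        gcongr; exact three_pow_mul_choose_mul_choose_le h
    _ = Fintype.card (ι → Fin 3 → κ) := by
        rw [← pow_add, Nat.add_sub_cancel' hk]; simp [N, P]

/-- A random graph works: some set of size `k` has fewer than `k` neighbors with probability at
most `3⁻ᵏ`, and `∑ k ≥ 1, 3⁻ᵏ < 1`. -/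
theorem exists_forall_card_le_card_neighbors [DecidableEq κ] [Nonempty κ] {K : ℕ}
    (h : 27 * Fintype.card ι * K ≤ Fintype.card κ ^ 2) :
    ∃ g : ι → Fin 3 → κ, ∀ I : Finset ι, #I ≤ K → #I ≤ #(neighbors g I) := by
  classical
  by_contra! hcon
  choose I hIK hlt using hcon
  let bad (k : ℕ) : Finset (ι → Fin 3 → κ) := {g | ∃ I : Finset ι, #I = k ∧ #(neighbors g I) < k}
  let total := Fintype.card (ι → Fin 3 → κ)
  have card_bad : ∀ k ∈ Finset.Ico 1 (min K (Fintype.card ι) + 1), #(bad k) ≤ total / 3 ^ k := by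
    intro k hk
    have hkK : k ≤ K := by grind
    have hkι : k ≤ Fintype.card ι := by grind
    have hk2 : 27 * Fintype.card ι * k ≤ Fintype.card κ ^ 2 := h.trans' (by gcongr)
    rw [Nat.le_div_iff_mul_le (by positivity), mul_comm]
    exact three_pow_mul_card_filter_neighbors_lt_le hkι hk2
  have cover : Finset.univ ⊆ (Finset.Ico 1 (min K (Fintype.card ι) + 1)).biUnion bad := by
    intro g _
    have hpos : 1 ≤ #(I g) := (Nat.zero_le _).trans_lt (hlt g)
    exact Finset.mem_biUnion.2 ⟨#(I g),
      Finset.mem_Ico.2 ⟨hpos, Nat.lt_succ_of_le (le_min (hIK g) (Finset.card_le_univ _))⟩,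
      Finset.mem_filter.2 ⟨Finset.mem_univ g, I g, rfl, hlt g⟩⟩
  have total_le : total ≤ total / 2 :=
    calc total ≤ #((Finset.Ico 1 (min K (Fintype.card ι) + 1)).biUnion bad) :=
          Finset.card_le_card cover
      _ ≤ ∑ k ∈ Finset.Ico 1 (min K (Fintype.card ι) + 1), total / 3 ^ k :=
          Finset.card_biUnion_le.trans (Finset.sum_le_sum card_bad)
      _ ≤ total / 2 := Nat.geom_sum_Ico_le (by norm_num) _ _
  exact absurd total_le (Nat.div_lt_self Fintype.card_pos one_lt_two).not_ge

theorem exists_isConcentrator [Nonempty κ] {K : ℕ}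
    (h : 27 * Fintype.card ι * K ≤ Fintype.card κ ^ 2) :
    ∃ g : ι → Fin 3 → κ, IsConcentrator g K := by
  classical
  obtain ⟨g, hg⟩ := exists_forall_card_le_card_neighbors h
  refine ⟨g, fun I hI => ?_⟩
  have hall : ∀ s : Finset I, #s ≤ #(s.biUnion fun i => Finset.univ.image (g i)) := by
    intro s
    have hs : #(s.map (Embedding.subtype _)) ≤ K :=
      (Finset.card_le_card (Finset.map_subtype_subset s)).trans hI
    simpa [neighbors, Finset.map_eq_image, Finset.image_biUnion,
      Finset.card_image_of_injective _ Subtype.val_injective] using hg _ hs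
  obtain ⟨f, f_inj, hf⟩ := (Finset.all_card_le_biUnion_card_iff_exists_injective _).1 hall
  have edge (i : ι) : ∃ a, ∀ hi : i ∈ I, g i a = f ⟨i, hi⟩ := by
    by_cases hi : i ∈ I
    · obtain ⟨a, -, ha⟩ := Finset.mem_image.1 (hf ⟨i, hi⟩)
      exact ⟨a, fun _ => ha⟩
    · exact ⟨0, fun hi' => absurd hi' hi⟩
  choose F hF using edge
  refine ⟨F, fun i hi j hj hij => congrArg Subtype.val (@f_inj ⟨i, hi⟩ ⟨j, hj⟩ ?_)⟩
  rw [← hF i hi, ← hF j hj]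
  exact hij

end Concentrator

section QuasiSubmeasure

variable {Ω : Type*}

/-- The intersection number of the family `𝒜` is at least `δ`, in the sense of Kelley: some point
belongs to at least the proportion `δ` of any finite list of members of `𝒜`. -/
def IntersectionNumberGE (𝒜 : Set (Set Ω)) (δ : ℝ) : Prop :=
  ∀ (n : ℕ) (A : Fin n → Set Ω), (∀ i, A i ∈ 𝒜) →
    ∃ x, δ * n ≤ ∑ i, (A i).indicator (1 : Ω → ℝ) x

variable [MeasurableSpace Ω]

/-- A *quasi-submeasure* with constant `C`: a monotone function `ψ` on the measurable sets which
vanishes at `∅` and is subadditive up to `C`, in the form suited to powers of `ψ`. Values at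
nonmeasurable sets are irrelevant. -/
structure IsQuasiSubmeasure (ψ : Set Ω → ℝ≥0∞) (C : ℝ≥0) : Prop where
  empty : ψ ∅ = 0
  mono {A B : Set Ω} : MeasurableSet A → MeasurableSet B → A ⊆ B → ψ A ≤ ψ B
  union_le {A B : Set Ω} : MeasurableSet A → MeasurableSet B → ψ (A ∪ B) ≤ C * max (ψ A) (ψ B)

/-- `ψ` is *uniformly exhaustive* if, for every `ε`, there is a bound on the number of pairwise
disjoint measurable sets on which `ψ` is at least `ε`. -/
def UniformlyExhaustive (ψ : Set Ω → ℝ≥0∞) : Prop :=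
  ∀ ε ≠ 0, ∃ n : ℕ, ∀ A : Fin n → Set Ω, (∀ i, MeasurableSet (A i)) →
    Pairwise (Disjoint on A) → ∃ i, ψ (A i) < ε

lemma IsQuasiSubmeasure.exists_iUnion_fin_three_le {ψ : Set Ω → ℝ≥0∞} {C : ℝ≥0}
    (hψ : IsQuasiSubmeasure ψ C) {B : Fin 3 → Set Ω} (hB : ∀ a, MeasurableSet (B a)) :
    ∃ a, ψ (⋃ a, B a) ≤ C * (C + 1) * ψ (B a) := by
  obtain ⟨a, ha⟩ := Finite.exists_max fun a => ψ (B a)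
  refine ⟨a, ?_⟩
  have union_eq : ⋃ a, B a = B 0 ∪ (B 1 ∪ B 2) := by
    ext x; simp [Fin.exists_fin_succ]
  have pair : ψ (B 1 ∪ B 2) ≤ (C + 1) * ψ (B a) :=
    calc ψ (B 1 ∪ B 2) ≤ C * max (ψ (B 1)) (ψ (B 2)) := hψ.union_le (hB 1) (hB 2)
      _ ≤ (C + 1) * ψ (B a) := by gcongr; exacts [le_self_add, max_le (ha 1) (ha 2)]
  have single : ψ (B 0) ≤ (C + 1) * ψ (B a) :=
    (ha 0).trans (le_mul_of_one_le_left' le_add_self)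
  calc ψ (⋃ a, B a) ≤ C * max (ψ (B 0)) (ψ (B 1 ∪ B 2)) := by
        rw [union_eq]; exact hψ.union_le (hB 0) ((hB 1).union (hB 2))
    _ ≤ C * ((C + 1) * ψ (B a)) := by gcongr; exact max_le single pair
    _ = C * (C + 1) * ψ (B a) := by rw [mul_assoc]

open Classical in
lemma IsConcentrator.exists_refinement {ι κ : Type*} [Fintype ι] {g : ι → Fin 3 → κ} {K : ℕ}
    (hg : IsConcentrator g K) {A : ι → Set Ω} (hA : ∀ i, MeasurableSet (A i))
    (hAK : ∀ x, #{i | x ∈ A i} ≤ K) :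
    ∃ B : ι → Fin 3 → Set Ω, (∀ i a, MeasurableSet (B i a)) ∧ (∀ i, ⋃ a, B i a = A i) ∧
      ∀ i j a b, i ≠ j → g i a = g j b → Disjoint (B i a) (B j b) := by
  choose! F hF using hg
  have measurable_pattern : Measurable fun x i => x ∈ A i :=
    measurable_pi_iff.2 fun i => measurable_mem.2 (hA i)
  refine ⟨fun i a => {x | x ∈ A i ∧ F {i | x ∈ A i} i = a}, fun i a => ?_, fun i => ?_, ?_⟩
  · exact (hA i).inter (measurable_pattern
      (Set.toFinite {t : ι → Prop | F {i | t i} i = a}).measurableSet)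
  · ext x; simp
  · refine fun i j a b hij hab => Set.disjoint_left.2 ?_
    rintro x ⟨hxi, rfl⟩ ⟨hxj, rfl⟩
    exact hij (hF _ (hAK x) (by simpa using hxi) (by simpa using hxj) hab)

open Classical in
lemma IsQuasiSubmeasure.exists_lt_mul_card {ψ : Set Ω → ℝ≥0∞} {C : ℝ≥0}
    (hψ : IsQuasiSubmeasure ψ C) {ε : ℝ≥0∞} {m : ℕ}
    (hm : ∀ A : Fin m → Set Ω, (∀ i, MeasurableSet (A i)) → Pairwise (Disjoint on A) →
      ∃ i, ψ (A i) < ε / (C * (C + 1)))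
    {ι : Type*} [Fintype ι] [Nonempty ι] {A : ι → Set Ω} (hA : ∀ i, MeasurableSet (A i))
    (hAε : ∀ i, ε ≤ ψ (A i)) :
    ∃ x, Fintype.card ι < 27 * m ^ 2 * #{i | x ∈ A i} := by
  by_contra! hfew
  have m_pos : 0 < m := Nat.pos_of_ne_zero fun h0 => by
    subst h0; exact (hm Fin.elim0 (fun i => i.elim0) (fun i => i.elim0)).choose.elim0
  obtain ⟨g, hg⟩ := exists_isConcentrator (ι := ι × Fin m) (κ := ι)
    (K := Fintype.card ι / (27 * m)) (by
      have := Nat.mul_div_le (Fintype.card ι) (27 * m)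
      simp only [Fintype.card_prod, Fintype.card_fin]
      nlinarith)
  have multiplicity (x) : #{j : ι × Fin m | x ∈ A j.1} ≤ Fintype.card ι / (27 * m) := by
    have eq_product : ({j | x ∈ A j.1} : Finset (ι × Fin m)) =
        ({i | x ∈ A i} : Finset ι) ×ˢ (Finset.univ : Finset (Fin m)) := by
      ext; simp
    rw [eq_product, Finset.card_product, Finset.card_univ, Fintype.card_fin,
      Nat.le_div_iff_mul_le (by positivity)]
    linarith [hfew x]
  obtain ⟨B, hB, iUnion_B, disjoint_B⟩ :=
    hg.exists_refinement (A := fun j => A j.1) (fun j => hA j.1) multiplicity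
  have large_piece (j) : ∃ a, ε / (C * (C + 1)) ≤ ψ (B j a) := by
    obtain ⟨a, ha⟩ := hψ.exists_iUnion_fin_three_le (hB j)
    exact ⟨a, ENNReal.div_le_of_le_mul' ((hAε j.1).trans (iUnion_B j ▸ ha))⟩
  choose a ha using large_piece
  obtain ⟨v, -, hv⟩ := Finset.exists_le_card_fiber_of_mul_le_card_of_maps_to
    (s := (Finset.univ : Finset (ι × Fin m))) (t := Finset.univ) (f := fun j => g j (a j)) (n := m)
    (fun _ _ => Finset.mem_univ _) Finset.univ_nonempty (by simp)
  obtain ⟨e⟩ : Nonempty (Fin m ↪ {j // g j (a j) = v}) :=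
    Embedding.nonempty_of_card_le (by simpa [Fintype.card_subtype] using hv)
  obtain ⟨i, hi⟩ := hm (fun i => B (e i) (a (e i))) (fun i => hB _ _) fun i j hij =>
    disjoint_B _ _ _ _ (fun h => hij (e.injective (Subtype.ext h)))
      ((e i).2.trans (e j).2.symm)
  exact hi.not_ge (ha _)

theorem IsQuasiSubmeasure.exists_intersectionNumberGE [Nonempty Ω] {ψ : Set Ω → ℝ≥0∞} {C : ℝ≥0}
    (hψ : IsQuasiSubmeasure ψ C) (hex : UniformlyExhaustive ψ) {ε : ℝ≥0∞} (hε : ε ≠ 0) :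
    ∃ δ > 0, IntersectionNumberGE {A | MeasurableSet A ∧ ε ≤ ψ A} δ := by
  classical
  obtain ⟨m, hm⟩ := hex (ε / (C * (C + 1))) (ENNReal.div_ne_zero.2 ⟨hε, by finiteness⟩)
  refine ⟨1 / (27 * m ^ 2 + 1), by positivity, fun n A hA => ?_⟩
  obtain _ | n := n
  · exact ⟨Classical.arbitrary Ω, by simp⟩
  obtain ⟨x, hx⟩ := hψ.exists_lt_mul_card hm (fun i => (hA i).1) fun i => (hA i).2
  rw [Fintype.card_fin] at hx
  refine ⟨x, ?_⟩
  have count : ∑ i, (A i).indicator (1 : Ω → ℝ) x = #{i | x ∈ A i} := by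
    simp [Set.indicator_apply]
  rw [count, one_div, inv_mul_le_iff₀ (by positivity)]
  have : ((n + 1 : ℕ) : ℝ) ≤ 27 * m ^ 2 * #{i | x ∈ A i} := by exact_mod_cast hx.le
  linarith [(#{i | x ∈ A i}).cast_nonneg (α := ℝ)]

end QuasiSubmeasure

section Kelley

theorem exists_linearMap_eq_one_of_pointedCone {E : Type*} [AddCommGroup E] [Module ℝ E]
    (s : PointedCone ℝ E) (e : E) (nonneg : ∀ c : ℝ, c • e ∈ s → 0 ≤ c)
    (absorb : ∀ y, ∃ c : ℝ, c • e + y ∈ s) :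
    ∃ φ : E →ₗ[ℝ] ℝ, φ e = 1 ∧ ∀ y ∈ s, 0 ≤ φ y := by
  have eq_zero (c : ℝ) (hc : c • e = 0) : c = 0 :=
    le_antisymm (neg_nonneg.1 <| nonneg (-c) (by simp [hc])) (nonneg c (by simp [hc]))
  let f : E →ₗ.[ℝ] ℝ := LinearPMap.mkSpanSingleton' e 1 fun c hc => by simp [eq_zero c hc]
  have f_smul (c : ℝ) (h : c • e ∈ f.domain) : f ⟨c • e, h⟩ = c :=
    (LinearPMap.mkSpanSingleton'_apply e (1 : ℝ) _ c h).trans (by simp)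
  have mem_domain (c : ℝ) : c • e ∈ f.domain := Submodule.mem_span_singleton.2 ⟨c, rfl⟩
  obtain ⟨φ, φ_eq, φ_nonneg⟩ := riesz_extension s f
    (by
      rintro ⟨y, hy⟩ hys
      obtain ⟨c, rfl⟩ := Submodule.mem_span_singleton.1 hy
      rw [f_smul]
      exact nonneg c hys)
    (fun y => (absorb y).elim fun c hc => ⟨⟨c • e, mem_domain c⟩, hc⟩)
  refine ⟨φ, ?_, φ_nonneg⟩
  have φ_smul : φ ((1 : ℝ) • e) = 1 := (φ_eq ⟨_, mem_domain 1⟩).trans (f_smul 1 _)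
  rwa [one_smul] at φ_smul

variable {Ω : Type*} {𝒜 : Set (Set Ω)} {δ : ℝ}

lemma IntersectionNumberGE.exists_weighted_le (h : IntersectionNumberGE 𝒜 δ) (hδ : 0 ≤ δ) {n : ℕ}
    {A : Fin n → Set Ω} (hA : ∀ i, A i ∈ 𝒜) {w : Fin n → ℝ} (hw : ∀ i, 0 ≤ w i) {η : ℝ}
    (hη : 0 < η) :
    ∃ x, δ * ∑ i, w i ≤ ∑ i, w i * (A i).indicator (1 : Ω → ℝ) x + η := by
  obtain ⟨L, hL⟩ := exists_nat_gt (n / η)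
  have L_pos : (0 : ℝ) < L := hL.trans_le' (by positivity)
  rw [div_lt_iff₀ hη] at hL
  let k (i : Fin n) : ℕ := ⌈w i * L⌉₊
  let e := Fintype.equivFin (Σ i, Fin (k i))
  obtain ⟨x, hx⟩ := h _ (fun j => A (e.symm j).1) fun j => hA _
  rw [Equiv.sum_comp e.symm fun s => (A s.1).indicator (1 : Ω → ℝ) x, Fintype.sum_sigma] at hx
  simp only [Fintype.card_sigma, Fintype.card_fin, Nat.cast_sum, Finset.sum_const,
    Finset.card_univ, nsmul_eq_mul] at hx
  refine ⟨x, le_of_mul_le_mul_left ?_ L_pos⟩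
  calc L * (δ * ∑ i, w i) = δ * ∑ i, w i * L := by rw [← Finset.sum_mul]; ring
    _ ≤ δ * ∑ i, (k i : ℝ) := by gcongr with i; exact Nat.le_ceil _
    _ ≤ ∑ i, k i * (A i).indicator (1 : Ω → ℝ) x := hx
    _ ≤ ∑ i, (L * (w i * (A i).indicator (1 : Ω → ℝ) x) + 1) := by
        gcongr with i
        have k_lt : (k i : ℝ) < w i * L + 1 :=
          Nat.ceil_lt_add_one (mul_nonneg (hw i) L.cast_nonneg)
        by_cases hxi : x ∈ A i
        · simp only [hxi, indicator_of_mem, Pi.one_apply]; linarith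
        · simp [hxi]
    _ = L * ∑ i, w i * (A i).indicator (1 : Ω → ℝ) x + n := by
        simp [Finset.sum_add_distrib, Finset.mul_sum]
    _ ≤ L * (∑ i, w i * (A i).indicator (1 : Ω → ℝ) x + η) := by linarith

variable [MeasurableSpace Ω]

instance simpleFunc_posSMulMono : PosSMulMono ℝ (SimpleFunc Ω ℝ) :=
  ⟨fun _ hc _ _ hfg x => mul_le_mul_of_nonneg_left (hfg x) hc⟩

/-- The cone of simple functions which are bounded below by a positive combination of functions
`1_A - δ` with `A ∈ 𝒜`. The functionals sought in Kelley's theorem are those nonnegative on it. -/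
def kelleyCone (𝒜 : Set (Set Ω)) (δ : ℝ) : PointedCone ℝ (SimpleFunc Ω ℝ) :=
  PointedCone.hull ℝ ((fun A => SimpleFunc.restrict 1 A - δ • 1) '' 𝒜) ⊔ PointedCone.positive ℝ _

lemma IntersectionNumberGE.nonneg_of_smul_one_mem_kelleyCone (h : IntersectionNumberGE 𝒜 δ)
    (hδ : 0 ≤ δ) (h𝒜 : ∀ A ∈ 𝒜, MeasurableSet A) {c : ℝ} (hc : c • 1 ∈ kelleyCone 𝒜 δ) :
    0 ≤ c := by
  obtain ⟨_, hy, f, hf, sum_eq⟩ := Submodule.mem_sup.1 hc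
  obtain ⟨n, w, g, rfl⟩ := Submodule.mem_span_set'.1 hy
  choose A hA g_eq using fun i => (g i).2
  refine le_of_forall_pos_le_add fun η hη => ?_
  obtain ⟨x, hx⟩ := h.exists_weighted_le hδ hA (fun i => (w i).2) hη
  obtain ⟨evalAt, evalAt_apply⟩ : ∃ l : SimpleFunc Ω ℝ →ₗ[ℝ] ℝ, ∀ k, l k = k x :=
    ⟨⟨⟨fun k => k x, fun _ _ => rfl⟩, fun _ _ => rfl⟩, fun _ => rfl⟩
  have evalAt_g (i) : evalAt (w i • (g i : SimpleFunc Ω ℝ)) =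
      w i * ((A i).indicator (1 : Ω → ℝ) x - δ) := by
    rw [← g_eq, show w i • _ = (w i : ℝ) • _ from rfl, map_smul, evalAt_apply]
    simp [h𝒜 _ (hA i)]
  have eval_eq : ∑ i, w i * ((A i).indicator (1 : Ω → ℝ) x - δ) + f x = c := by
    have := congrArg evalAt sum_eq
    rw [map_add, map_sum, Finset.sum_congr rfl fun i _ => evalAt_g i] at this
    simpa [evalAt_apply] using this
  have f_nonneg : 0 ≤ f x := hf x
  simp only [mul_sub, Finset.sum_sub_distrib, ← Finset.sum_mul] at eval_eq
  linarith

lemma IntersectionNumberGE.exists_positive_functional (h : IntersectionNumberGE 𝒜 δ) (hδ : 0 ≤ δ)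
    (h𝒜 : ∀ A ∈ 𝒜, MeasurableSet A) :
    ∃ φ : SimpleFunc Ω ℝ →ₗ[ℝ] ℝ, φ 1 = 1 ∧ (∀ f, 0 ≤ f → 0 ≤ φ f) ∧
      ∀ A ∈ 𝒜, δ ≤ φ (SimpleFunc.restrict 1 A) := by
  have absorb (f : SimpleFunc Ω ℝ) : ∃ c : ℝ, c • 1 + f ∈ kelleyCone 𝒜 δ := by
    obtain ⟨c, hc⟩ := f.exists_forall_norm_le
    refine ⟨c, Submodule.mem_sup_right fun x => ?_⟩
    simpa [neg_le_iff_add_nonneg'] using neg_le_of_abs_le (hc x)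
  obtain ⟨φ, φ_one, φ_nonneg⟩ := exists_linearMap_eq_one_of_pointedCone (kelleyCone 𝒜 δ) 1
    (fun _ => h.nonneg_of_smul_one_mem_kelleyCone hδ h𝒜) absorb
  refine ⟨φ, φ_one, fun f hf => φ_nonneg f (Submodule.mem_sup_right hf), fun A hA => ?_⟩
  simpa [φ_one] using
    φ_nonneg _ (Submodule.mem_sup_left (PointedCone.subset_hull (mem_image_of_mem _ hA)))

lemma isSetRing_measurableSet : IsSetRing {A : Set Ω | MeasurableSet A} where
  empty_mem := MeasurableSet.empty
  union_mem _ _ := MeasurableSet.union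
  sdiff_mem _ _ := MeasurableSet.diff

theorem IntersectionNumberGE.exists_addContent (h : IntersectionNumberGE 𝒜 δ) (hδ : 0 ≤ δ)
    (h𝒜 : ∀ A ∈ 𝒜, MeasurableSet A) :
    ∃ m : AddContent ℝ≥0∞ {A : Set Ω | MeasurableSet A}, m univ = 1 ∧
      ∀ A ∈ 𝒜, ENNReal.ofReal δ ≤ m A := by
  obtain ⟨φ, φ_one, φ_nonneg, hφ⟩ := h.exists_positive_functional hδ h𝒜
  have φ_restrict_nonneg {A : Set Ω} (hA : MeasurableSet A) :
      0 ≤ φ ((1 : SimpleFunc Ω ℝ).restrict A) :=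
    φ_nonneg _ fun x => by
      simpa [hA] using indicator_apply_nonneg (s := A) fun _ => zero_le_one (α := ℝ)
  refine ⟨isSetRing_measurableSet.addContent_of_union
    (fun A => ENNReal.ofReal (φ ((1 : SimpleFunc Ω ℝ).restrict A))) (by simp) ?_, ?_, ?_⟩
  · intro A B (hA : MeasurableSet A) (hB : MeasurableSet B) hAB
    have restrict_union : (1 : SimpleFunc Ω ℝ).restrict (A ∪ B) =
        SimpleFunc.restrict 1 A + SimpleFunc.restrict 1 B := by
      apply SimpleFunc.coe_injective
      simp only [SimpleFunc.coe_restrict, SimpleFunc.coe_add, hA, hB, hA.union hB,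
        indicator_union_of_disjoint hAB]
      rfl
    simp only [restrict_union, map_add]
    exact ENNReal.ofReal_add (φ_restrict_nonneg hA) (φ_restrict_nonneg hB)
  · change ENNReal.ofReal (φ ((1 : SimpleFunc Ω ℝ).restrict univ)) = 1
    simp [φ_one]
  · exact fun A hA => ENNReal.ofReal_le_ofReal (hφ A hA)

end Kelley

section Control

variable {Ω : Type*} [MeasurableSpace Ω]

lemma exists_measure_le_addContent (m : AddContent ℝ≥0∞ {A : Set Ω | MeasurableSet A}) :
    ∃ μ : Measure Ω, (∀ A, MeasurableSet A → μ A ≤ m A) ∧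
      ∀ A, MeasurableSet A → ∀ δ, μ A < δ → ∃ B : ℕ → Set Ω,
        (∀ n, MeasurableSet (B n)) ∧ Monotone B ∧ ⋃ n, B n = A ∧ ∀ n, m (B n) < δ := by
  have semiring : IsSetSemiring {A : Set Ω | MeasurableSet A} :=
    isSetRing_measurableSet.isSetSemiring
  set ν : OuterMeasure Ω :=
    inducedOuterMeasure (fun A _ => m A) semiring.empty_mem addContent_empty with ν_def
  have measurable_le : ‹MeasurableSpace Ω› ≤ ν.caratheodory := fun A hA =>
    m.isCaratheodory_inducedOuterMeasure_of_mem semiring hA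
  refine ⟨ν.toMeasure measurable_le, fun A hA => ?_, fun A hA δ hδ => ?_⟩
  · rw [toMeasure_apply _ _ hA]
    exact le_inducedOuterMeasure.1 le_rfl A hA
  · rw [toMeasure_apply _ _ hA, ν_def, inducedOuterMeasure, OuterMeasure.ofFunction_apply] at hδ
    obtain ⟨t, hAt, ht⟩ := by simpa only [iInf_lt_iff, exists_prop] using hδ
    have measurable_t (n : ℕ) : MeasurableSet (t n) := by
      by_contra hn
      exact ((ENNReal.le_tsum n).trans_lt (ht.trans_le le_top)).ne (extend_eq_top _ hn)
    simp only [extend_eq _ (measurable_t _)] at ht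
    have measurable_acc (n : ℕ) : MeasurableSet (accumulate t n) :=
      isSetRing_measurableSet.accumulate_mem measurable_t n
    refine ⟨fun n => A ∩ accumulate t n, fun n => hA.inter (measurable_acc n),
      monotone_const.inter monotone_accumulate, ?_, fun n => ?_⟩
    · rwa [← inter_iUnion, iUnion_accumulate, inter_eq_left]
    · calc m (A ∩ accumulate t n)
        _ ≤ m (accumulate t n) :=
            addContent_mono semiring (hA.inter (measurable_acc n)) (measurable_acc n)
              inter_subset_right
        _ = m (⋃ i ∈ Finset.Iic n, t i) := by simp only [accumulate_def, Finset.mem_Iic]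
        _ ≤ ∑ i ∈ Finset.Iic n, m (t i) :=
            addContent_biUnion_le isSetRing_measurableSet fun i _ => measurable_t i
        _ ≤ ∑' i, m (t i) := ENNReal.sum_le_tsum _
        _ < δ := ht

lemma exists_measurableSet_forall_measure_diff_eq_zero (μ : Measure Ω) [IsFiniteMeasure μ]
    {p : Set Ω → Prop} (p_empty : p ∅)
    (p_iUnion : ∀ A : ℕ → Set Ω, (∀ n, MeasurableSet (A n)) → (∀ n, p (A n)) → p (⋃ n, A n)) :
    ∃ Z, MeasurableSet Z ∧ p Z ∧ ∀ A, MeasurableSet A → p A → μ (A \ Z) = 0 := by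
  obtain ⟨a, -, a_tendsto, ha⟩ := exists_seq_tendsto_sSup
    (S := μ '' {A | MeasurableSet A ∧ p A}) ⟨μ ∅, ∅, ⟨.empty, p_empty⟩, rfl⟩ (OrderTop.bddAbove _)
  choose Z hZ hZa using ha
  have measurable_iUnion : MeasurableSet (⋃ n, Z n) := .iUnion fun n => (hZ n).1
  have maximal {A : Set Ω} (hA : MeasurableSet A) (hpA : p A) : μ A ≤ μ (⋃ n, Z n) :=
    calc μ A ≤ sSup (μ '' {A | MeasurableSet A ∧ p A}) := le_sSup ⟨A, ⟨hA, hpA⟩, rfl⟩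
      _ ≤ μ (⋃ n, Z n) :=
        le_of_tendsto' a_tendsto fun n => hZa n ▸ measure_mono (subset_iUnion Z n)
  have p_Z : p (⋃ n, Z n) := p_iUnion Z (fun n => (hZ n).1) fun n => (hZ n).2
  refine ⟨⋃ n, Z n, measurable_iUnion, p_Z, fun A hA hpA => ?_⟩
  have p_union : p (A ∪ ⋃ n, Z n) := by
    have := p_iUnion (fun n => Nat.casesOn n A Z) (by rintro (_ | n); exacts [hA, (hZ n).1])
      (by rintro (_ | n); exacts [hpA, (hZ n).2])
    rwa [← union_iUnion_nat_succ] at this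
  have union_ae_eq : (⋃ n, Z n : Set Ω) =ᵐ[μ] (A ∪ ⋃ n, Z n : Set Ω) :=
    ae_eq_of_subset_of_measure_ge subset_union_right (maximal (hA.union measurable_iUnion) p_union)
      measurable_iUnion.nullMeasurableSet (measure_ne_top μ _)
  exact ae_le_set.1 (subset_union_left.eventuallyLE.trans union_ae_eq.symm.le)

/-- The *Fatou property* of a set function: continuity from below along measurable sets. -/
def FatouProperty (ψ : Set Ω → ℝ≥0∞) : Prop :=
  ∀ B : ℕ → Set Ω, (∀ n, MeasurableSet (B n)) → Monotone B → ψ (⋃ n, B n) ≤ ⨆ n, ψ (B n)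

variable {ψ : Set Ω → ℝ≥0∞} {C : ℝ≥0}

lemma IsQuasiSubmeasure.iUnion_eq_zero (hψ : IsQuasiSubmeasure ψ C) (hF : FatouProperty ψ)
    {A : ℕ → Set Ω} (hA : ∀ n, MeasurableSet (A n)) (h0 : ∀ n, ψ (A n) = 0) :
    ψ (⋃ n, A n) = 0 := by
  have measurable_acc (n : ℕ) : MeasurableSet (accumulate A n) :=
    isSetRing_measurableSet.accumulate_mem hA n
  have acc_eq_zero (n : ℕ) : ψ (accumulate A n) = 0 := by
    induction n with
    | zero => rw [accumulate_zero_nat, h0]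
    | succ n ih =>
      rw [accumulate_succ, ← nonpos_iff_eq_zero]
      simpa only [ih, h0, max_self, mul_zero] using hψ.union_le (measurable_acc n) (hA (n + 1))
  simpa only [iUnion_accumulate, acc_eq_zero, iSup_const, nonpos_iff_eq_zero] using
    hF _ measurable_acc monotone_accumulate

lemma IsQuasiSubmeasure.exists_finite_measure_le_of_null [Nonempty Ω] (hψ : IsQuasiSubmeasure ψ C)
    (hex : UniformlyExhaustive ψ) (hF : FatouProperty ψ) {ε : ℝ≥0∞} (hε : ε ≠ 0) :
    ∃ μ : Measure Ω, IsFiniteMeasure μ ∧ ∀ A, MeasurableSet A → μ A = 0 → ψ A ≤ ε := by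
  obtain ⟨δ, hδ, h⟩ := hψ.exists_intersectionNumberGE hex hε
  obtain ⟨m, m_univ, hm⟩ := h.exists_addContent hδ.le fun A hA => hA.1
  obtain ⟨μ, μ_le, hμ⟩ := exists_measure_le_addContent m
  refine ⟨μ, ⟨(μ_le univ .univ).trans_lt (by simp [m_univ])⟩, fun A hA hA0 => ?_⟩
  obtain ⟨B, hB, B_mono, rfl, m_lt⟩ :=
    hμ A hA (ENNReal.ofReal δ) (by rw [hA0]; exact ENNReal.ofReal_pos.2 hδ)
  refine (hF B hB B_mono).trans (iSup_le fun n => ?_)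
  by_contra! hn
  exact (m_lt n).not_ge (hm _ ⟨hB n, hn.le⟩)

lemma IsQuasiSubmeasure.exists_finite_measure_null_imp (hψ : IsQuasiSubmeasure ψ C)
    (hex : UniformlyExhaustive ψ) (hF : FatouProperty ψ) :
    ∃ μ : Measure Ω, IsFiniteMeasure μ ∧ ∀ A, MeasurableSet A → μ A = 0 → ψ A = 0 := by
  cases isEmpty_or_nonempty Ω
  · exact ⟨0, inferInstance, fun A _ _ => by rw [eq_empty_of_isEmpty A, hψ.empty]⟩
  choose ν hν hνψ using fun n : ℕ =>
    hψ.exists_finite_measure_le_of_null hex hF (ENNReal.inv_ne_zero.2 (ENNReal.natCast_ne_top n))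
  obtain ⟨μ, hμ, ν_ac, -⟩ := exists_isFiniteMeasure_absolutelyContinuous (Measure.sum ν)
  refine ⟨μ, hμ, fun A hA hA0 => ?_⟩
  have hν0 := (Measure.sum_apply_eq_zero' hA).1 (ν_ac hA0)
  by_contra hψA
  obtain ⟨n, hn⟩ := ENNReal.exists_inv_nat_lt hψA
  exact hn.not_ge (hνψ n A hA (hν0 n))

theorem IsQuasiSubmeasure.exists_finite_measure_null_iff (hψ : IsQuasiSubmeasure ψ C)
    (hex : UniformlyExhaustive ψ) (hF : FatouProperty ψ) :
    ∃ μ : Measure Ω, IsFiniteMeasure μ ∧ ∀ A, MeasurableSet A → (ψ A = 0 ↔ μ A = 0) := by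
  obtain ⟨ν, hν, hνψ⟩ := hψ.exists_finite_measure_null_imp hex hF
  obtain ⟨Z, hZ, hψZ, Z_maximal⟩ := exists_measurableSet_forall_measure_diff_eq_zero ν
    (p := fun A => ψ A = 0) hψ.empty fun A hA h0 => hψ.iUnion_eq_zero hF hA h0
  refine ⟨ν.restrict Zᶜ, inferInstance, fun A hA => ?_⟩
  rw [Measure.restrict_apply hA, ← sdiff_eq]
  refine ⟨Z_maximal A hA, fun h0 => nonpos_iff_eq_zero.1 ?_⟩
  calc ψ A ≤ ψ (A \ Z ∪ Z) := hψ.mono hA ((hA.diff hZ).union hZ) (by simp)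
    _ ≤ C * max (ψ (A \ Z)) (ψ Z) := hψ.union_le (hA.diff hZ) hZ
    _ = 0 := by simp [hνψ _ (hA.diff hZ) h0, hψZ]

end Control

namespace AdmissibleQuasinorm

variable {Ω : Type*} [TopologicalSpace Ω] [MeasurableSpace Ω] (X : AdmissibleQuasinorm Ω)

lemma N_zero : X.N 0 = 0 := by
  simpa [Pi.zero_def] using X.smul 0 0 measurable_zero

lemma N_eq_zero_of_support_subset {f g : Ω → ℝ} (hf : Measurable f) (hg : Measurable g)
    (hgf : support g ⊆ support f) (h0 : X.N f = 0) : X.N g = 0 := by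
  set truncation : ℕ → Ω → ℝ := fun n x => min (n * |f x|) |g x| with truncation_def
  have measurable_truncation (n) : Measurable (truncation n) := (hf.abs.const_mul _).min hg.abs
  have truncation_null (n) : X.N (truncation n) = 0 := by
    rw [← nonpos_iff_eq_zero]
    calc X.N (truncation n) ≤ X.N fun x => n * f x :=
          X.mono _ _ (measurable_truncation n) (hf.const_mul _) fun x => by
            rw [abs_of_nonneg (by positivity), abs_mul, Nat.abs_cast]
            exact min_le_left _ _
      _ = 0 := by rw [X.smul _ _ hf, h0, mul_zero]
  have truncation_tendsto (x) : Tendsto (truncation · x) atTop (𝓝 |g x|) := by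
    by_cases hx : f x = 0
    · have : g x = 0 := notMem_support.1 fun h => hgf h hx
      simp [truncation_def, hx, this]
    · have : Tendsto (fun n : ℕ => n * |f x|) atTop atTop :=
        tendsto_natCast_atTop_atTop.atTop_mul_const (abs_pos.2 hx)
      refine tendsto_const_nhds.congr' ?_
      filter_upwards [this.eventually_ge_atTop |g x|] with n hn using (min_eq_right hn).symm
  have tendsto_N := X.cont truncation (fun x => |g x|) measurable_truncation hg.abs
    (fun n x => by positivity)
    (fun n x => min_le_min_right _ (by gcongr; exact n.le_succ)) truncation_tendsto
  simp only [truncation_null] at tendsto_N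
  rw [← nonpos_iff_eq_zero, ← tendsto_nhds_unique tendsto_N tendsto_const_nhds]
  exact X.mono _ _ hg hg.abs fun x => (abs_abs _).ge

lemma N_indicator_support_eq_zero_iff {u f : Ω → ℝ} (hu : Measurable u) (hu0 : ∀ x, u x ≠ 0)
    (hf : Measurable f) : X.N ((support f).indicator u) = 0 ↔ X.N f = 0 := by
  have hfu : Measurable ((support f).indicator u) := hu.indicator (measurableSet_support hf)
  have support_eq : support ((support f).indicator u) = support f := by
    rw [support_indicator, inter_eq_left]; exact fun x _ => hu0 x
  exact ⟨X.N_eq_zero_of_support_subset hfu hf support_eq.ge,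
    X.N_eq_zero_of_support_subset hf hfu support_eq.le⟩

variable {u : Ω → ℝ} (hu : Measurable u) (hu0 : 0 ≤ u)

include hu hu0

lemma N_indicator_mono {A B : Set Ω} (hA : MeasurableSet A) (hB : MeasurableSet B) (hAB : A ⊆ B) :
    X.N (A.indicator u) ≤ X.N (B.indicator u) :=
  X.mono _ _ (hu.indicator hA) (hu.indicator hB) fun x => by
    rw [abs_of_nonneg (indicator_apply_nonneg fun _ => hu0 x)]
    exact (indicator_le_indicator_of_subset hAB hu0 x).trans (le_abs_self _)

lemma isQuasiSubmeasure_indicator {C : ℝ≥0}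
    (hC : ∀ f g : Ω → ℝ, Measurable f → Measurable g →
      (∀ x, 0 ≤ f x) → (∀ x, 0 ≤ g x) → (∀ x, f x = 0 ∨ g x = 0) →
      X.N (fun x => f x + g x) ≤ C * (X.N f + X.N g)) :
    IsQuasiSubmeasure (fun A => X.N (A.indicator u)) (C * 2) where
  empty := by rw [indicator_empty]; exact X.N_zero
  mono := X.N_indicator_mono hu hu0
  union_le {A B} hA hB := by
    have disj : Disjoint A (B \ A) := disjoint_sdiff_right
    have diff_le : X.N ((B \ A).indicator u) ≤ X.N (B.indicator u) :=
      X.N_indicator_mono hu hu0 (hB.diff hA) hB sdiff_subset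
    calc X.N ((A ∪ B).indicator u)
      _ = X.N fun x => A.indicator u x + (B \ A).indicator u x := by
        rw [← union_sdiff_self, indicator_union_of_disjoint disj]
      _ ≤ C * (X.N (A.indicator u) + X.N ((B \ A).indicator u)) :=
        hC _ _ (hu.indicator hA) (hu.indicator (hB.diff hA)) (indicator_nonneg fun x _ => hu0 x)
          (indicator_nonneg fun x _ => hu0 x) fun x => by
            by_cases hx : x ∈ A <;> simp [hx]
      _ ≤ C * (2 * max (X.N (A.indicator u)) (X.N (B.indicator u))) := by
        rw [two_mul]
        gcongr
        exacts [le_max_left _ _, diff_le.trans (le_max_right _ _)]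
      _ = ↑(C * 2) * max (X.N (A.indicator u)) (X.N (B.indicator u)) := by
        rw [coe_mul, coe_ofNat, mul_assoc]

lemma uniformlyExhaustive_indicator {q b : ℝ} (hq : 0 < q) (hXb : CrudeLower X q b)
    (hN : X.N u ≠ ⊤) : UniformlyExhaustive fun A => X.N (A.indicator u) := by
  intro ε hε
  have bound_ne_top : (ENNReal.ofReal b * X.N u) ^ q ≠ ⊤ :=
    rpow_ne_top_of_nonneg hq.le (mul_ne_top ofReal_ne_top hN)
  have pow_ne_zero : ε ^ q ≠ 0 := by rwa [Ne, rpow_eq_zero_iff_of_pos hq]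
  obtain ⟨n, hn⟩ := ENNReal.exists_nat_gt (div_ne_top bound_ne_top pow_ne_zero)
  refine ⟨n, fun A hA hdisj => ?_⟩
  by_contra! hεA
  have sum_eq : (fun x => ∑ i, (A i).indicator u x) = (⋃ i, A i).indicator u := by
    simpa using (Finset.indicator_biUnion Finset.univ A (hdisj.set_pairwise _)).symm
  have disjSupp : DisjSupp fun i => (A i).indicator u := fun i j hij x => by
    by_cases hx : x ∈ A i
    · exact .inr (indicator_of_notMem (disjoint_left.1 (hdisj hij) hx) _)
    · exact .inl (indicator_of_notMem hx _)
  have := calc (n : ℝ≥0∞) * ε ^ q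
    _ = ∑ _i : Fin n, ε ^ q := by simp
    _ ≤ ∑ i, X.N ((A i).indicator u) ^ q := by gcongr with i; exact hεA i
    _ ≤ (ENNReal.ofReal b * X.N ((⋃ i, A i).indicator u)) ^ q := by
      rw [← rpow_inv_le_iff hq, ← one_div, ← sum_eq]
      exact hXb n _ (fun i => hu.indicator (hA i)) disjSupp
    _ ≤ (ENNReal.ofReal b * X.N u) ^ q := by
      gcongr
      simpa using X.N_indicator_mono hu hu0 (.iUnion hA) .univ (subset_univ _)
  exact hn.not_ge ((ENNReal.le_div_iff_mul_le (.inl pow_ne_zero) (.inr bound_ne_top)).2 this)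

lemma fatouProperty_indicator : FatouProperty fun A => X.N (A.indicator u) := by
  intro B hB B_mono
  have := X.cont (fun n => (B n).indicator u) ((⋃ n, B n).indicator u)
    (fun n => hu.indicator (hB n)) (hu.indicator (.iUnion hB))
    (fun n => indicator_nonneg fun x _ => hu0 x)
    (fun n => indicator_le_indicator_of_subset (B_mono n.le_succ) hu0)
    fun x => (B_mono.tendsto_indicator B u x).mono_right (pure_le_nhds _)
  exact le_of_tendsto' this fun n => le_iSup (fun n => X.N ((B n).indicator u)) n

end AdmissibleQuasinorm

lemma le_two_rpow_inv_mul_add {p : ℝ} (hp : 0 < p) {x y z : ℝ≥0∞} (h : x ^ p ≤ y ^ p + z ^ p) :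
    x ≤ ((2 : ℝ≥0) ^ p⁻¹ : ℝ≥0) * (y + z) := by
  rw [← rpow_le_rpow_iff hp]
  calc x ^ p ≤ y ^ p + z ^ p := h
    _ ≤ (y + z) ^ p + (y + z) ^ p := by
      gcongr
      exacts [le_self_add, le_add_self]
    _ = (((2 : ℝ≥0) ^ p⁻¹ : ℝ≥0) * (y + z)) ^ p := by
      rw [mul_rpow_of_nonneg _ _ hp.le, ← coe_rpow_of_nonneg _ hp.le,
        ← NNReal.rpow_mul, inv_mul_cancel₀ hp.ne', NNReal.rpow_one, coe_ofNat, two_mul]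

-- `C` is finite, whereas the constant provided by `X.quasi` may be `⊤`.
theorem pNormable_crude_lower_estimate_exists_control_measure_general
    {Ω : Type*} [TopologicalSpace Ω] [MeasurableSpace Ω]
    (q b : ℝ) (hq : 0 < q) (X : AdmissibleQuasinorm Ω) (C : ℝ≥0)
    (hC : ∀ f g : Ω → ℝ, Measurable f → Measurable g →
      (∀ x, 0 ≤ f x) → (∀ x, 0 ≤ g x) → (∀ x, f x = 0 ∨ g x = 0) →
      X.N (fun x => f x + g x) ≤ C * (X.N f + X.N g))
    (hXb : CrudeLower X q b) :
    ∃ μ : Measure Ω, IsFiniteMeasure μ ∧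
      ∀ f : Ω → ℝ, Measurable f → (X.N f = 0 ↔ f =ᵐ[μ] 0) := by
  obtain ⟨u, hu, u_pos, -, hN⟩ := X.exists_pos
  have u_nonneg : 0 ≤ u := fun x => (u_pos x).le
  obtain ⟨μ, hμ, null_iff⟩ :=
    (X.isQuasiSubmeasure_indicator hu u_nonneg hC).exists_finite_measure_null_iff
      (X.uniformlyExhaustive_indicator hu u_nonneg hq hXb hN.ne)
      (X.fatouProperty_indicator hu u_nonneg)
  refine ⟨μ, hμ, fun f hf => ?_⟩
  calc X.N f = 0 ↔ X.N ((support f).indicator u) = 0 :=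
        (X.N_indicator_support_eq_zero_iff hu (fun x => (u_pos x).ne') hf).symm
    _ ↔ μ (support f) = 0 := null_iff _ (measurableSet_support hf)
    _ ↔ f =ᵐ[μ] 0 := Iff.rfl

/-- If an admissible quasinorm is `p`-normable and satisfies a crude lower
`q`-estimate, then there is a finite Borel measure `μ` on `Ω` such that `‖f‖_X = 0` iff
`f = 0` `μ`-a.e. -/
theorem pNormable_crude_lower_estimate_exists_control_measure
    {Ω : Type*} [TopologicalSpace Ω] [CompactSpace Ω] [T2Space Ω]
    [MeasurableSpace Ω] [BorelSpace Ω]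
    (p q b : ℝ) (hp : 0 < p) (hq : 0 < q)
    (X : AdmissibleQuasinorm Ω)
    (hXp : ∀ f g : Ω → ℝ, Measurable f → Measurable g →
      X.N (fun x => f x + g x) ^ p ≤ X.N f ^ p + X.N g ^ p)
    (hXb : CrudeLower X q b) :
    ∃ μ : Measure Ω, IsFiniteMeasure μ ∧
      ∀ f : Ω → ℝ, Measurable f → (X.N f = 0 ↔ f =ᵐ[μ] 0) :=
  pNormable_crude_lower_estimate_exists_control_measure_general q b hq X (2 ^ p⁻¹)
    (fun f g hf hg _ _ _ => le_two_rpow_inv_mul_add hp (hXp f g hf hg)) hXb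
end

section
/- Suppose 0 < p < q < ∞ and μ is a finite Borel measure on a compact Hausdorff space Ω. Then for every Borel function f, ‖f‖_{Λ_{p,q}(μ)} ≤ ‖f‖_{L_{p,q}(μ)} ≤ ((1+θ)^{2(1+θ)} θ^{−θ})^{1/q} ‖f‖_{Λ_{p,q}(μ)}, where 1 + θ = q/p. -/
open Set Filter Topology MeasureTheory ENNReal

/-- `A : Fin n → Set Ω` is a finite Borel partition of `Ω`. -/
def IsBorelPartition {Ω : Type*} [MeasurableSpace Ω] {n : ℕ} (A : Fin n → Set Ω) : Prop :=
  (∀ i, MeasurableSet (A i)) ∧ Pairwise (Function.onFun Disjoint A) ∧ (⋃ i, A i) = univ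

/-- The `Λ_{p,q}(μ)` functional for `p < q`:
`sup (Σᵢ (inf_{ω ∈ Aᵢ} |f ω|)^q μ(Aᵢ)^{q/p})^{1/q}` over finite Borel partitions. -/
noncomputable def LambdaSup {Ω : Type*} [MeasurableSpace Ω]
    (μ : Measure Ω) (p q : ℝ) (f : Ω → ℝ) : ℝ≥0∞ :=
  ⨆ (n : ℕ) (A : Fin n → Set Ω) (_ : IsBorelPartition A),
    (∑ i, (⨅ x ∈ A i, ENNReal.ofReal |f x|) ^ q * μ (A i) ^ (q / p)) ^ (1 / q)

/-- The `Λ_{p,q}(μ)` functional for `q < p`: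
`inf (Σᵢ (sup_{ω ∈ Aᵢ} |f ω|)^q μ(Aᵢ)^{q/p})^{1/q}` over finite Borel partitions.
(Here `LambdaInf μ p q` has inner exponent `q` and measure exponent `q/p`.) -/
noncomputable def LambdaInf {Ω : Type*} [MeasurableSpace Ω]
    (μ : Measure Ω) (p q : ℝ) (f : Ω → ℝ) : ℝ≥0∞ :=
  ⨅ (n : ℕ) (A : Fin n → Set Ω) (_ : IsBorelPartition A),
    (∑ i, (⨆ x ∈ A i, ENNReal.ofReal |f x|) ^ q * μ (A i) ^ (q / p)) ^ (1 / q)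

/-- The decreasing rearrangement `f*(t) = inf_{μ(E) ≤ t} sup_{ω ∉ E} |f ω|`. -/
noncomputable def decRearr {Ω : Type*} [MeasurableSpace Ω]
    (μ : Measure Ω) (f : Ω → ℝ) (t : ℝ) : ℝ≥0∞ :=
  ⨅ (E : Set Ω) (_ : MeasurableSet E) (_ : μ E ≤ ENNReal.ofReal t),
    ⨆ x ∈ Eᶜ, ENNReal.ofReal |f x|

/-- The Lorentz quasinorm `‖f‖_{L_{p,q}(μ)} = (∫₀^∞ (q/p) t^{q/p-1} f*(t)^q dt)^{1/q}`. -/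
noncomputable def LorentzNorm {Ω : Type*} [MeasurableSpace Ω]
    (μ : Measure Ω) (p q : ℝ) (f : Ω → ℝ) : ℝ≥0∞ :=
  (∫⁻ t in Ioi (0 : ℝ),
      ENNReal.ofReal (q / p * t ^ (q / p - 1)) * decRearr μ f t ^ q) ^ (1 / q)

/-!
Put `r = q / p`. Since `f*(t) ^ q > s` exactly when `μ {|f| ^ q > s} > t`, the layer cake formula
turns `‖f‖_{L_{p,q}} ^ q` into `∫₀^∞ μ {|f| ^ q > s} ^ r ds`. Applied to the sums defining
`‖f‖_{Λ_{p,q}} ^ q`, the same formula and the superadditivity of `x ↦ x ^ r` give the first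
inequality. For the second, cut the integral at the levels `(b ^ r) ^ k`, `k : ℤ`: the level sets
are tails of the sequence of shells between consecutive levels, so a weighted Hardy inequality in
`ℓ ^ r` bounds the integral by a sum over the shells, and these are the pieces of a partition.
The choice `b = 1 + θ`, with Bernoulli's inequality, produces the constant.
-/

section Minkowski

variable {ι κ : Type*} {r : ℝ}

theorem sum_rpow_le_rpow_sum (s : Finset ι) (g : ι → ℝ≥0∞) (hr : 1 ≤ r) :
    ∑ i ∈ s, g i ^ r ≤ (∑ i ∈ s, g i) ^ r := by
  induction s using Finset.cons_induction with
  | empty => simp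
  | cons i s hi ih =>
    rw [Finset.sum_cons, Finset.sum_cons]
    exact (add_le_add_right ih _).trans (ENNReal.add_rpow_le_rpow_add _ _ hr)

theorem Lp_sum_le_sum_Lp (s : Finset κ) (t : Finset ι) (g : ι → κ → ℝ≥0∞) (hr : 1 ≤ r) :
    (∑ k ∈ s, (∑ j ∈ t, g j k) ^ r) ^ r⁻¹ ≤ ∑ j ∈ t, (∑ k ∈ s, g j k ^ r) ^ r⁻¹ := by
  have hr₀ : 0 < r := one_pos.trans_le hr
  have h_add (u v : κ → ℝ≥0∞) : (∑ k ∈ s, (u + v) k ^ r) ^ r⁻¹ ≤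
      (∑ k ∈ s, u k ^ r) ^ r⁻¹ + (∑ k ∈ s, v k ^ r) ^ r⁻¹ := by
    simpa only [one_div, Pi.add_apply] using ENNReal.Lp_add_le s u v hr
  simpa only [Finset.sum_apply] using
    Finset.le_sum_of_subadditive (fun u : κ → ℝ≥0∞ => (∑ k ∈ s, u k ^ r) ^ r⁻¹)
      (by simp [hr₀]) h_add t g

theorem Lp_tsum_le_tsum_Lp (g : ι → κ → ℝ≥0∞) (hr : 1 ≤ r) :
    (∑' k, (∑' j, g j k) ^ r) ^ r⁻¹ ≤ ∑' j, (∑' k, g j k ^ r) ^ r⁻¹ := by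
  have hr₀ : 0 < r := one_pos.trans_le hr
  rw [ENNReal.rpow_inv_le_iff hr₀, ENNReal.tsum_eq_iSup_sum]
  refine iSup_le fun s => ?_
  have h_lim : Tendsto (fun t : Finset ι => ∑ k ∈ s, (∑ j ∈ t, g j k) ^ r) atTop
      (𝓝 (∑ k ∈ s, (∑' j, g j k) ^ r)) :=
    tendsto_finsetSum _ fun k _ =>
      (ENNReal.continuous_rpow_const.tendsto _).comp ENNReal.summable.hasSum
  refine le_of_tendsto' h_lim fun t => (ENNReal.rpow_inv_le_iff hr₀).1 ?_
  calc (∑ k ∈ s, (∑ j ∈ t, g j k) ^ r) ^ r⁻¹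
      ≤ ∑ j ∈ t, (∑ k ∈ s, g j k ^ r) ^ r⁻¹ := Lp_sum_le_sum_Lp s t g hr
    _ ≤ ∑ j ∈ t, (∑' k, g j k ^ r) ^ r⁻¹ := by
        gcongr
        exact ENNReal.sum_le_tsum s
    _ ≤ ∑' j, (∑' k, g j k ^ r) ^ r⁻¹ := ENNReal.sum_le_tsum t

-- Minkowski's inequality applies because the `j`-th shift has weighted norm `b⁻¹ ^ j` times
-- that of `m`.
theorem tsum_zpow_mul_tail_rpow_le {b : ℝ≥0∞} (hb₀ : b ≠ 0) (hb : b ≠ ∞) (hr : 1 ≤ r)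
    (m : ℤ → ℝ≥0∞) :
    ∑' k : ℤ, (b ^ k * ∑' j : ℕ, m (k + j)) ^ r ≤
      ((1 - b⁻¹)⁻¹) ^ r * ∑' k : ℤ, (b ^ k * m k) ^ r := by
  have hr₀ : 0 < r := one_pos.trans_le hr
  have h_term (k : ℤ) (j : ℕ) :
      b ^ k * m (k + j) = b⁻¹ ^ j * (b ^ (k + j) * m (k + j)) := by
    have h_cancel : b⁻¹ ^ j * b ^ j = 1 := by
      rw [← mul_pow, ENNReal.inv_mul_cancel hb₀ hb, one_pow]
    calc b ^ k * m (k + j) = b⁻¹ ^ j * b ^ j * (b ^ k * m (k + j)) := by rw [h_cancel, one_mul]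
      _ = b⁻¹ ^ j * (b ^ (k + j) * m (k + j)) := by
          rw [ENNReal.zpow_add hb₀ hb, zpow_natCast]
          ring
  have h_shift (j : ℕ) :
      (∑' k : ℤ, (b⁻¹ ^ j * (b ^ (k + j) * m (k + j))) ^ r) ^ r⁻¹ =
        b⁻¹ ^ j * (∑' k : ℤ, (b ^ k * m k) ^ r) ^ r⁻¹ := by
    have h_reindex : ∑' k : ℤ, (b ^ (k + j) * m (k + j)) ^ r = ∑' k : ℤ, (b ^ k * m k) ^ r :=
      (Equiv.addRight (j : ℤ)).tsum_eq fun k => (b ^ k * m k) ^ r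
    simp_rw [ENNReal.mul_rpow_of_nonneg (b⁻¹ ^ j) _ hr₀.le]
    rw [ENNReal.tsum_mul_left, h_reindex, ENNReal.mul_rpow_of_nonneg _ _ (inv_nonneg.2 hr₀.le),
      ENNReal.rpow_rpow_inv hr₀.ne']
  suffices h_norm : (∑' k : ℤ, (b ^ k * ∑' j : ℕ, m (k + j)) ^ r) ^ r⁻¹ ≤
      (1 - b⁻¹)⁻¹ * (∑' k : ℤ, (b ^ k * m k) ^ r) ^ r⁻¹ by
    rwa [ENNReal.rpow_inv_le_iff hr₀, ENNReal.mul_rpow_of_nonneg _ _ hr₀.le,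
      ENNReal.rpow_inv_rpow hr₀.ne'] at h_norm
  simp_rw [← ENNReal.tsum_mul_left, h_term]
  calc (∑' k : ℤ, (∑' j : ℕ, b⁻¹ ^ j * (b ^ (k + j) * m (k + j))) ^ r) ^ r⁻¹
      ≤ ∑' j : ℕ, (∑' k : ℤ, (b⁻¹ ^ j * (b ^ (k + j) * m (k + j))) ^ r) ^ r⁻¹ :=
        Lp_tsum_le_tsum_Lp _ hr
    _ = (1 - b⁻¹)⁻¹ * (∑' k : ℤ, (b ^ k * m k) ^ r) ^ r⁻¹ := by
        simp_rw [h_shift, ENNReal.tsum_mul_right, ENNReal.tsum_geometric]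

end Minkowski

section LayerCake

/-- The measure `d(t ^ r) = r t ^ (r - 1) dt` on `(0, ∞)`, against which the `L_{p,q}` quasinorm
integrates `(f*) ^ q` when `r = q / p`. -/
noncomputable def rpowMeasure (r : ℝ) : Measure ℝ :=
  (volume.restrict (Ioi 0)).withDensity fun t => ENNReal.ofReal (r * t ^ (r - 1))

theorem rpowMeasure_one : rpowMeasure 1 = volume.restrict (Ioi 0) := by
  simp [rpowMeasure]

instance sFinite_rpowMeasure (r : ℝ) : SFinite (rpowMeasure r) := by
  unfold rpowMeasure
  infer_instance

theorem lintegral_rpowMeasure (r : ℝ) {g : ℝ → ℝ≥0∞} (hg : Measurable g) :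
    ∫⁻ t, g t ∂rpowMeasure r = ∫⁻ t in Ioi 0, ENNReal.ofReal (r * t ^ (r - 1)) * g t :=
  lintegral_withDensity_eq_lintegral_mul _ (by fun_prop) hg

theorem measurableSet_ofReal_lt (X : ℝ≥0∞) : MeasurableSet {t : ℝ | ENNReal.ofReal t < X} :=
  measurableSet_lt ENNReal.measurable_ofReal measurable_const

theorem rpowMeasure_Iio {r : ℝ} (hr : 0 < r) {c : ℝ} (hc : 0 ≤ c) :
    rpowMeasure r (Iio c) = ENNReal.ofReal (c ^ r) := by
  have h_int : IntervalIntegrable (fun t : ℝ => r * t ^ (r - 1)) volume 0 c :=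
    (intervalIntegral.intervalIntegrable_rpow' (by linarith)).const_mul r
  have h_nonneg : 0 ≤ᵐ[volume.restrict (Ioc 0 c)] fun t : ℝ => r * t ^ (r - 1) :=
    (ae_restrict_iff' measurableSet_Ioc).2 <| ae_of_all _ fun t ht =>
      mul_nonneg hr.le (Real.rpow_nonneg ht.1.le _)
  have h_value : ∫ t in (0 : ℝ)..c, r * t ^ (r - 1) = c ^ r := by
    rw [intervalIntegral.integral_const_mul, integral_rpow (Or.inl (by linarith)),
      sub_add_cancel, Real.zero_rpow hr.ne', sub_zero, mul_div_cancel₀ _ hr.ne']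
  rw [rpowMeasure, withDensity_apply _ measurableSet_Iio, Measure.restrict_restrict
    measurableSet_Iio, inter_comm, Ioi_inter_Iio, setLIntegral_congr Ioo_ae_eq_Ioc,
    ← ofReal_integral_eq_lintegral_ofReal
      ((intervalIntegrable_iff_integrableOn_Ioc_of_le hc).1 h_int) h_nonneg,
    ← intervalIntegral.integral_of_le hc, h_value]

theorem rpowMeasure_ofReal_lt {r : ℝ} (hr : 0 < r) (X : ℝ≥0∞) :
    rpowMeasure r {t | ENNReal.ofReal t < X} = X ^ r := by
  induction X with
  | top =>
    rw [ENNReal.top_rpow_of_pos hr]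
    refine ENNReal.eq_top_of_forall_nnreal_le fun y => ?_
    have hy : ENNReal.ofReal (((y : ℝ) ^ r⁻¹) ^ r) = y := by
      rw [Real.rpow_inv_rpow y.coe_nonneg hr.ne', ENNReal.ofReal_coe_nnreal]
    rw [← hy, ← rpowMeasure_Iio hr (Real.rpow_nonneg y.coe_nonneg _)]
    exact measure_mono fun t _ => ENNReal.ofReal_lt_top
  | coe x =>
    rcases eq_or_ne x 0 with rfl | hx
    · simp [hr]
    · have h_Iio : {t : ℝ | ENNReal.ofReal t < x} = Iio (x : ℝ) := by
        ext t
        rw [mem_ofPred_eq, ← ENNReal.ofReal_coe_nnreal,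
          ENNReal.ofReal_lt_ofReal_iff (NNReal.coe_pos.2 (pos_iff_ne_zero.2 hx)), mem_Iio]
      rw [h_Iio, rpowMeasure_Iio hr x.coe_nonneg,
        ← ENNReal.ofReal_rpow_of_nonneg x.coe_nonneg hr.le, ENNReal.ofReal_coe_nnreal]

theorem volume_restrict_Ioi_ofReal_lt (X : ℝ≥0∞) :
    volume.restrict (Ioi (0 : ℝ)) {s | ENNReal.ofReal s < X} = X := by
  simpa only [rpowMeasure_one, ENNReal.rpow_one] using rpowMeasure_ofReal_lt one_pos X

theorem lintegral_eq_lintegral_measure_ofReal_lt {α : Type*} [MeasurableSpace α] (ν : Measure α)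
    [SFinite ν] {g : α → ℝ≥0∞} (hg : Measurable g) :
    ∫⁻ x, g x ∂ν = ∫⁻ s in Ioi (0 : ℝ), ν {x | ENNReal.ofReal s < g x} := by
  have hS : MeasurableSet {z : α × ℝ | ENNReal.ofReal z.2 < g z.1} :=
    measurableSet_lt (by fun_prop) (by fun_prop)
  calc ∫⁻ x, g x ∂ν
      = ∫⁻ x, volume.restrict (Ioi (0 : ℝ)) {s | ENNReal.ofReal s < g x} ∂ν := by
        simp_rw [volume_restrict_Ioi_ofReal_lt]
    _ = (ν.prod (volume.restrict (Ioi 0))) {z | ENNReal.ofReal z.2 < g z.1} :=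
        (Measure.prod_apply hS).symm
    _ = ∫⁻ s in Ioi (0 : ℝ), ν {x | ENNReal.ofReal s < g x} := Measure.prod_apply_symm hS

theorem sum_mul_eq_lintegral {ι : Type*} [Fintype ι] (m c : ι → ℝ≥0∞) :
    ∑ i, m i * c i = ∫⁻ s in Ioi (0 : ℝ), ∑ i with ENNReal.ofReal s < m i, c i := by
  calc ∑ i, m i * c i
      = ∑ i, ∫⁻ s in Ioi (0 : ℝ), {s | ENNReal.ofReal s < m i}.indicator (fun _ => c i) s := by
        refine Finset.sum_congr rfl fun i _ => ?_
        rw [lintegral_indicator_const (measurableSet_ofReal_lt _), volume_restrict_Ioi_ofReal_lt,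
          mul_comm]
    _ = ∫⁻ s in Ioi (0 : ℝ), ∑ i, {s | ENNReal.ofReal s < m i}.indicator (fun _ => c i) s :=
        (lintegral_finsetSum _ fun i _ =>
          measurable_const.indicator (measurableSet_ofReal_lt _)).symm
    _ = ∫⁻ s in Ioi (0 : ℝ), ∑ i with ENNReal.ofReal s < m i, c i := by
        simp only [indicator_apply, mem_ofPred_eq, Finset.sum_filter]

end LayerCake

section GeometricLevels

theorem setLIntegral_Ioi_le_tsum_of_antitone {G : ℝ → ℝ≥0∞} (hG : Antitone G) {a : ℝ}
    (ha : 1 < a) :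
    ∫⁻ s in Ioi (0 : ℝ), G s ≤
      ENNReal.ofReal (a - 1) * ∑' k : ℤ, ENNReal.ofReal (a ^ k) * G (a ^ k) := by
  have ha₀ : 0 < a := one_pos.trans ha
  have h_cover : Ioi (0 : ℝ) ⊆ ⋃ k : ℤ, Ioc (a ^ k) (a ^ (k + 1)) := fun s hs =>
    mem_iUnion.2 (exists_mem_Ioc_zpow hs ha)
  have h_length (k : ℤ) : volume (Ioc (a ^ k) (a ^ (k + 1))) =
      ENNReal.ofReal (a - 1) * ENNReal.ofReal (a ^ k) := by
    rw [Real.volume_Ioc, ← ENNReal.ofReal_mul (by linarith), zpow_add_one₀ ha₀.ne']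
    ring_nf
  calc ∫⁻ s in Ioi (0 : ℝ), G s
      ≤ ∑' k : ℤ, ∫⁻ s in Ioc (a ^ k) (a ^ (k + 1)), G s :=
        (lintegral_mono_set h_cover).trans (lintegral_iUnion_le _ _)
    _ ≤ ∑' k : ℤ, ∫⁻ _ in Ioc (a ^ k) (a ^ (k + 1)), G (a ^ k) :=
        ENNReal.tsum_le_tsum fun k =>
          setLIntegral_mono' measurableSet_Ioc fun s hs => hG hs.1.le
    _ = ENNReal.ofReal (a - 1) * ∑' k : ℤ, ENNReal.ofReal (a ^ k) * G (a ^ k) := by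
        rw [← ENNReal.tsum_mul_left]
        refine tsum_congr fun k => ?_
        rw [setLIntegral_const, h_length]
        ring

/-- The `k`-th shell of `g` in ratio `a`: the set where `g` lies between the consecutive powers
`a ^ k` and `a ^ (k + 1)`. The interval is open on the left so that `{g > a ^ k}` is exactly the
union of the shells of index at least `k`. -/
def shell {Ω : Type*} (g : Ω → ℝ) (a : ℝ) (k : ℤ) : Set Ω :=
  g ⁻¹' Ioc (a ^ k) (a ^ (k + 1))

theorem pairwise_disjoint_shell {Ω : Type*} (g : Ω → ℝ) {a : ℝ} (ha : 1 ≤ a) :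
    Pairwise (Function.onFun Disjoint (shell g a)) :=
  fun _ _ hkl => ((zpow_right_mono₀ ha).pairwise_disjoint_on_Ioc_succ hkl).preimage g

variable {Ω : Type*} [MeasurableSpace Ω] (μ : Measure Ω) (g : Ω → ℝ)

theorem measure_zpow_lt_le_tsum_shell {a : ℝ} (ha : 1 < a) (k : ℤ) :
    μ {x | a ^ k < g x} ≤ ∑' j : ℕ, μ (shell g a (k + j)) := by
  refine (measure_mono fun x hx => ?_).trans (measure_iUnion_le _)
  have hx' : a ^ k < g x := hx
  obtain ⟨n, hn⟩ := exists_mem_Ioc_zpow ((zpow_pos (one_pos.trans ha) k).trans hx') ha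
  have hkn : k < n + 1 := (zpow_lt_zpow_iff_right₀ ha).1 (hx'.trans_le hn.2)
  obtain ⟨j, rfl⟩ := Int.le.dest (Int.lt_add_one_iff.1 hkn)
  exact mem_iUnion.2 ⟨j, hn⟩

theorem lintegral_measure_lt_rpow_le {b r : ℝ} (hb : 1 < b) (hr : 1 ≤ r) :
    ∫⁻ s in Ioi (0 : ℝ), μ {x | s < g x} ^ r ≤
      ENNReal.ofReal (b ^ r - 1) * ((1 - (ENNReal.ofReal b)⁻¹)⁻¹) ^ r *
        ∑' k : ℤ, ENNReal.ofReal ((b ^ r) ^ k) * μ (shell g (b ^ r) k) ^ r := by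
  have hr₀ : 0 < r := one_pos.trans_le hr
  have hb₀ : 0 < b := one_pos.trans hb
  have ha : 1 < b ^ r := Real.one_lt_rpow hb hr₀
  set B := ENNReal.ofReal b
  set m : ℤ → ℝ≥0∞ := fun k => μ (shell g (b ^ r) k)
  have h_weight (k : ℤ) (X : ℝ≥0∞) :
      ENNReal.ofReal ((b ^ r) ^ k) * X ^ r = (B ^ k * X) ^ r := by
    rw [ENNReal.mul_rpow_of_nonneg _ _ hr₀.le, ← ENNReal.rpow_intCast, ← ENNReal.rpow_mul,
      ← Real.rpow_intCast, ← Real.rpow_mul hb₀.le, mul_comm r, ENNReal.ofReal_rpow_of_pos hb₀]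
  have h_anti : Antitone fun s : ℝ => μ {x | s < g x} ^ r := fun s t hst =>
    ENNReal.rpow_le_rpow (measure_mono fun x hx => hst.trans_lt hx) hr₀.le
  calc ∫⁻ s in Ioi (0 : ℝ), μ {x | s < g x} ^ r
      ≤ ENNReal.ofReal (b ^ r - 1) *
          ∑' k : ℤ, ENNReal.ofReal ((b ^ r) ^ k) * μ {x | (b ^ r) ^ k < g x} ^ r :=
        setLIntegral_Ioi_le_tsum_of_antitone h_anti ha
    _ ≤ ENNReal.ofReal (b ^ r - 1) * ∑' k : ℤ, (B ^ k * ∑' j : ℕ, m (k + j)) ^ r := by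
        simp_rw [h_weight]
        gcongr with k
        exact measure_zpow_lt_le_tsum_shell μ g ha k
    _ ≤ ENNReal.ofReal (b ^ r - 1) *
          (((1 - B⁻¹)⁻¹) ^ r * ∑' k : ℤ, (B ^ k * m k) ^ r) := by
        gcongr
        exact tsum_zpow_mul_tail_rpow_le (ENNReal.ofReal_pos.2 hb₀).ne' ENNReal.ofReal_ne_top hr m
    _ = ENNReal.ofReal (b ^ r - 1) * ((1 - B⁻¹)⁻¹) ^ r *
          ∑' k : ℤ, ENNReal.ofReal ((b ^ r) ^ k) * m k ^ r := by
        simp_rw [h_weight, mul_assoc]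

end GeometricLevels

section Rearrangement

variable {Ω : Type*} [MeasurableSpace Ω] (μ : Measure Ω) (f : Ω → ℝ)

theorem decRearr_antitone : Antitone (decRearr μ f) := fun _ _ hst =>
  iInf_mono fun _ => iInf_mono fun _ =>
    iInf_mono' fun h => ⟨h.trans (ENNReal.ofReal_le_ofReal hst), le_rfl⟩

variable {μ f}

theorem measure_le_of_decRearr_lt {t : ℝ} {v : ℝ≥0∞} (h : decRearr μ f t < v) :
    μ {x | v ≤ ENNReal.ofReal |f x|} ≤ ENNReal.ofReal t := by
  simp only [decRearr, iInf_lt_iff] at h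
  obtain ⟨E, -, hE_le, hE_sup⟩ := h
  refine (measure_mono fun x (hx : v ≤ _) => ?_).trans hE_le
  by_contra hxE
  exact ((le_iSup₂_of_le (f := fun y (_ : y ∈ Eᶜ) => ENNReal.ofReal |f y|) x hxE hx).trans_lt
    hE_sup).false

theorem decRearr_le_iff {t : ℝ} {s : ℝ≥0∞} :
    decRearr μ f t ≤ s ↔ μ {x | s < ENNReal.ofReal |f x|} ≤ ENNReal.ofReal t := by
  constructor
  · intro h
    rcases eq_or_ne s ∞ with rfl | hs
    · simp
    obtain ⟨v, hv_anti, hv_mem, hv_lim⟩ := exists_seq_strictAnti_tendsto' hs.lt_top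
    have h_iUnion : {x | s < ENNReal.ofReal |f x|} = ⋃ n, {x | v n ≤ ENNReal.ofReal |f x|} := by
      have h_Ioi := iUnion_Ici_eq_Ioi_of_lt_of_tendsto (fun n => (hv_mem n).1) hv_lim
      exact (congrArg (preimage fun x => ENNReal.ofReal |f x|) h_Ioi.symm).trans preimage_iUnion
    have h_mono : Monotone fun n => {x | v n ≤ ENNReal.ofReal |f x|} :=
      fun _ _ hmn _ hx => (hv_anti.antitone hmn).trans hx
    rw [h_iUnion, h_mono.measure_iUnion]
    exact iSup_le fun n => measure_le_of_decRearr_lt (h.trans_lt (hv_mem n).1)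
  · intro h
    let E := toMeasurable μ {x | s < ENNReal.ofReal |f x|}
    have hE : ∀ x ∈ Eᶜ, ENNReal.ofReal |f x| ≤ s := fun x hx =>
      not_lt.1 fun hlt => hx (subset_toMeasurable μ _ hlt)
    exact iInf_le_of_le E <| iInf_le_of_le (measurableSet_toMeasurable μ _) <|
      iInf_le_of_le ((measure_toMeasurable _).trans_le h) (iSup₂_le hE)

theorem ofReal_lt_decRearr_rpow_iff {q s t : ℝ} (hq : 0 < q) (hs : 0 ≤ s) :
    ENNReal.ofReal s < decRearr μ f t ^ q ↔ ENNReal.ofReal t < μ {x | s < |f x| ^ q} := by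
  have h_level : {x | ENNReal.ofReal s ^ q⁻¹ < ENNReal.ofReal |f x|} = {x | s < |f x| ^ q} := by
    ext x
    rw [mem_ofPred_eq, mem_ofPred_eq, ENNReal.rpow_inv_lt_iff hq,
      ENNReal.ofReal_rpow_of_nonneg (abs_nonneg _) hq.le,
      ENNReal.ofReal_lt_ofReal_iff_of_nonneg hs]
  rw [← ENNReal.rpow_inv_lt_iff hq, ← not_le, decRearr_le_iff, not_le, h_level]

variable (μ f)

theorem lorentzNorm_eq_lintegral_measure_lt {p q : ℝ} (hp : 0 < p) (hq : 0 < q) :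
    LorentzNorm μ p q f =
      (∫⁻ s in Ioi (0 : ℝ), μ {x | s < |f x| ^ q} ^ (q / p)) ^ (1 / q) := by
  have h_meas : Measurable fun t => decRearr μ f t ^ q :=
    (decRearr_antitone μ f).measurable.pow_const q
  rw [LorentzNorm, ← lintegral_rpowMeasure _ h_meas,
    lintegral_eq_lintegral_measure_ofReal_lt _ h_meas]
  congr 1
  refine setLIntegral_congr_fun measurableSet_Ioi fun s (hs : 0 < s) => ?_
  simp_rw [ofReal_lt_decRearr_rpow_iff hq hs.le]
  exact rpowMeasure_ofReal_lt (div_pos hq hp) _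

end Rearrangement

section Partitions

variable {Ω : Type*} [MeasurableSpace Ω] (μ : Measure Ω) (f : Ω → ℝ) {p q : ℝ}

theorem sum_iInf_rpow_mul_le_lintegral {ι : Type*} [Fintype ι] {r : ℝ} (hq : 0 < q) (hr : 1 ≤ r)
    {A : ι → Set Ω} (hA_meas : ∀ i, MeasurableSet (A i))
    (hA_disj : Pairwise (Function.onFun Disjoint A)) :
    ∑ i, (⨅ x ∈ A i, ENNReal.ofReal |f x|) ^ q * μ (A i) ^ r ≤
      ∫⁻ s in Ioi (0 : ℝ), μ {x | s < |f x| ^ q} ^ r := by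
  have hr₀ : 0 ≤ r := zero_le_one.trans hr
  rw [sum_mul_eq_lintegral]
  refine setLIntegral_mono' measurableSet_Ioi fun s (hs : 0 < s) => ?_
  set I := Finset.univ.filter fun i => ENNReal.ofReal s < (⨅ x ∈ A i, ENNReal.ofReal |f x|) ^ q
  have h_subset : ⋃ i ∈ I, A i ⊆ {x | s < |f x| ^ q} := by
    refine iUnion₂_subset fun i hi x hx => ?_
    have h_inf : (⨅ x ∈ A i, ENNReal.ofReal |f x|) ^ q ≤ ENNReal.ofReal (|f x| ^ q) := by
      rw [← ENNReal.ofReal_rpow_of_nonneg (abs_nonneg _) hq.le]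
      exact ENNReal.rpow_le_rpow (iInf₂_le x hx) hq.le
    exact (ENNReal.ofReal_lt_ofReal_iff_of_nonneg hs.le).1
      ((Finset.mem_filter.1 hi).2.trans_le h_inf)
  calc ∑ i ∈ I, μ (A i) ^ r
      ≤ (∑ i ∈ I, μ (A i)) ^ r := sum_rpow_le_rpow_sum I _ hr
    _ = μ (⋃ i ∈ I, A i) ^ r := by
        rw [measure_biUnion_finset (hA_disj.set_pairwise _) fun i _ => hA_meas i]
    _ ≤ μ {x | s < |f x| ^ q} ^ r := ENNReal.rpow_le_rpow (measure_mono h_subset) hr₀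

variable (p)

theorem sum_partition_le_lambdaSup_rpow {ι : Type*} [Fintype ι] (hq : 0 < q) {A : ι → Set Ω}
    (hA_meas : ∀ i, MeasurableSet (A i)) (hA_disj : Pairwise (Function.onFun Disjoint A))
    (hA_univ : ⋃ i, A i = univ) :
    ∑ i, (⨅ x ∈ A i, ENNReal.ofReal |f x|) ^ q * μ (A i) ^ (q / p) ≤ LambdaSup μ p q f ^ q := by
  let e := (Fintype.equivFin ι).symm
  have h_partition : IsBorelPartition (A ∘ e) :=
    ⟨fun i => hA_meas (e i), fun _ _ hij => hA_disj (e.injective.ne hij),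
      (e.surjective.iUnion_comp A).trans hA_univ⟩
  rw [← e.sum_comp, ← ENNReal.rpow_inv_le_iff hq, ← one_div]
  exact le_iSup_of_le _ <| le_iSup_of_le (A ∘ e) <| le_iSup_of_le h_partition le_rfl

theorem sum_le_lambdaSup_rpow {ι : Type*} [Fintype ι] (hq : 0 < q) {A : ι → Set Ω}
    (hA_meas : ∀ i, MeasurableSet (A i)) (hA_disj : Pairwise (Function.onFun Disjoint A)) :
    ∑ i, (⨅ x ∈ A i, ENNReal.ofReal |f x|) ^ q * μ (A i) ^ (q / p) ≤ LambdaSup μ p q f ^ q := by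
  let B : Option ι → Set Ω := fun o => o.elim (⋃ i, A i)ᶜ A
  have hB_meas : ∀ o, MeasurableSet (B o) :=
    Option.rec (MeasurableSet.iUnion hA_meas).compl hA_meas
  have h_compl (i : ι) : Disjoint (⋃ i, A i)ᶜ (A i) :=
    disjoint_compl_left.mono_right (subset_iUnion A i)
  have hB_disj : Pairwise (Function.onFun Disjoint B) := by
    rintro (_ | i) (_ | j) hij
    · exact absurd rfl hij
    · exact h_compl j
    · exact (h_compl i).symm
    · exact hA_disj fun h => hij (congrArg some h)
  have hB_univ : ⋃ o, B o = univ := by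
    rw [iUnion_option]
    exact compl_union_self _
  calc ∑ i, (⨅ x ∈ A i, ENNReal.ofReal |f x|) ^ q * μ (A i) ^ (q / p)
      ≤ ∑ o, (⨅ x ∈ B o, ENNReal.ofReal |f x|) ^ q * μ (B o) ^ (q / p) := by
        rw [Fintype.sum_option]
        exact le_add_self
    _ ≤ LambdaSup μ p q f ^ q := sum_partition_le_lambdaSup_rpow μ f p hq hB_meas hB_disj hB_univ

theorem tsum_le_lambdaSup_rpow {ι : Type*} (hq : 0 < q) {A : ι → Set Ω}
    (hA_meas : ∀ i, NullMeasurableSet (A i) μ) (hA_disj : Pairwise (Function.onFun Disjoint A)) :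
    ∑' i, (⨅ x ∈ A i, ENNReal.ofReal |f x|) ^ q * μ (A i) ^ (q / p) ≤ LambdaSup μ p q f ^ q := by
  choose B hB_subset hB_meas hB_ae using fun i => (hA_meas i).exists_measurable_subset_ae_eq
  rw [ENNReal.tsum_eq_iSup_sum]
  refine iSup_le fun s => ?_
  rw [← Finset.sum_coe_sort s]
  calc ∑ i : s, (⨅ x ∈ A i, ENNReal.ofReal |f x|) ^ q * μ (A i) ^ (q / p)
      ≤ ∑ i : s, (⨅ x ∈ B i, ENNReal.ofReal |f x|) ^ q * μ (B i) ^ (q / p) := by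
        refine Finset.sum_le_sum fun i _ => ?_
        rw [measure_congr (hB_ae i)]
        exact mul_le_mul_left (ENNReal.rpow_le_rpow (biInf_mono (hB_subset i)) hq.le) _
    _ ≤ LambdaSup μ p q f ^ q := sum_le_lambdaSup_rpow μ f p hq (fun i => hB_meas i)
        fun i j hij => (hA_disj (Subtype.coe_injective.ne hij)).mono (hB_subset i) (hB_subset j)

variable {f}

theorem tsum_shell_le_lambdaSup_rpow (hf : AEMeasurable f μ) {a : ℝ} (hq : 0 < q)
    (ha : 1 ≤ a) :
    ∑' k : ℤ, ENNReal.ofReal (a ^ k) * μ (shell (fun x => |f x| ^ q) a k) ^ (q / p) ≤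
      LambdaSup μ p q f ^ q := by
  set A : ℤ → Set Ω := shell (fun x => |f x| ^ q) a
  have hA_meas (k : ℤ) : NullMeasurableSet (A k) μ :=
    (hf.abs.pow_const q).nullMeasurable measurableSet_Ioc
  have h_inf (k : ℤ) : ENNReal.ofReal (a ^ k) ≤ (⨅ x ∈ A k, ENNReal.ofReal |f x|) ^ q := by
    rw [← ENNReal.rpow_inv_le_iff hq]
    refine le_iInf₂ fun x hx => ?_
    rw [ENNReal.rpow_inv_le_iff hq, ENNReal.ofReal_rpow_of_nonneg (abs_nonneg _) hq.le]
    exact ENNReal.ofReal_le_ofReal hx.1.le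
  calc ∑' k : ℤ, ENNReal.ofReal (a ^ k) * μ (A k) ^ (q / p)
      ≤ ∑' k : ℤ, (⨅ x ∈ A k, ENNReal.ofReal |f x|) ^ q * μ (A k) ^ (q / p) := by
        gcongr with k
        exact h_inf k
    _ ≤ LambdaSup μ p q f ^ q :=
        tsum_le_lambdaSup_rpow μ f p hq hA_meas (pairwise_disjoint_shell _ ha)

end Partitions

section Constant

variable {θ : ℝ}

theorem rpow_self_one_add_sub_one_le (hθ : 0 ≤ θ) :
    (1 + θ) ^ (1 + θ) - 1 ≤ (1 + θ) ^ (1 + θ) * θ := by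
  have h_pos : 0 < 1 + θ := by linarith
  have h_bernoulli : 1 + (1 + θ) * ((1 + θ)⁻¹ - 1) ≤ (1 + ((1 + θ)⁻¹ - 1)) ^ (1 + θ) :=
    one_add_mul_self_le_rpow_one_add (by linarith [inv_pos.2 h_pos]) (by linarith)
  have h_inv : 1 - θ ≤ ((1 + θ) ^ (1 + θ))⁻¹ := by
    rw [add_sub_cancel, Real.inv_rpow h_pos.le, mul_sub, mul_inv_cancel₀ h_pos.ne'] at h_bernoulli
    linarith
  have h_mul : (1 - θ) * (1 + θ) ^ (1 + θ) ≤ 1 :=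
    (le_inv_mul_iff₀' (Real.rpow_pos_of_pos h_pos _)).1 (by simpa using h_inv)
  linarith

theorem rpow_self_one_add_sub_one_mul_le (hθ : 0 < θ) :
    ((1 + θ) ^ (1 + θ) - 1) * ((1 - (1 + θ)⁻¹)⁻¹) ^ (1 + θ) ≤
      (1 + θ) ^ (2 * (1 + θ)) * θ ^ (-θ) := by
  have h_pos : 0 < 1 + θ := by linarith
  have h_inv : (1 - (1 + θ)⁻¹)⁻¹ = (1 + θ) / θ := by
    rw [← inv_div, inv_inj, eq_div_iff h_pos.ne', sub_mul, inv_mul_cancel₀ h_pos.ne']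
    ring
  have h_pow : θ * θ ^ (-(1 + θ)) = θ ^ (-θ) := by
    rw [← Real.rpow_one_add' hθ.le (by linarith)]
    ring_nf
  calc ((1 + θ) ^ (1 + θ) - 1) * ((1 - (1 + θ)⁻¹)⁻¹) ^ (1 + θ)
      ≤ (1 + θ) ^ (1 + θ) * θ * ((1 + θ) / θ) ^ (1 + θ) := by
        rw [h_inv]
        gcongr
        exact rpow_self_one_add_sub_one_le hθ.le
    _ = (1 + θ) ^ (1 + θ) * (1 + θ) ^ (1 + θ) * (θ * θ ^ (-(1 + θ))) := by
        rw [Real.div_rpow h_pos.le hθ.le, Real.rpow_neg hθ.le]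
        ring
    _ = (1 + θ) ^ (2 * (1 + θ)) * θ ^ (-θ) := by
        rw [← Real.rpow_add h_pos, ← two_mul, h_pow]

end Constant

section Comparison

variable {Ω : Type*} [MeasurableSpace Ω] (μ : Measure Ω) {p q : ℝ}

theorem lambdaSup_le_lorentzNorm (f : Ω → ℝ) (hp : 0 < p) (hpq : p ≤ q) :
    LambdaSup μ p q f ≤ LorentzNorm μ p q f := by
  have hq : 0 < q := hp.trans_le hpq
  rw [lorentzNorm_eq_lintegral_measure_lt μ f hp hq]
  refine iSup_le fun _ => iSup_le fun A => iSup_le fun hA => ?_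
  exact ENNReal.rpow_le_rpow
    (sum_iInf_rpow_mul_le_lintegral μ f hq ((one_le_div hp).2 hpq) hA.1 hA.2.1)
    (one_div_nonneg.2 hq.le)

theorem lorentzNorm_rpow_le {f : Ω → ℝ} (hf : AEMeasurable f μ) (hp : 0 < p) (hpq : p ≤ q)
    {b : ℝ} (hb : 1 < b) :
    LorentzNorm μ p q f ^ q ≤
      ENNReal.ofReal ((b ^ (q / p) - 1) * ((1 - b⁻¹)⁻¹) ^ (q / p)) * LambdaSup μ p q f ^ q := by
  have hq : 0 < q := hp.trans_le hpq
  have hr : 1 ≤ q / p := (one_le_div hp).2 hpq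
  have hb₀ : 0 < b := one_pos.trans hb
  have ha : 1 ≤ b ^ (q / p) := Real.one_le_rpow hb.le (zero_le_one.trans hr)
  have h_gap : 0 < 1 - b⁻¹ := sub_pos.2 (inv_lt_one_of_one_lt₀ hb)
  have h_const : ENNReal.ofReal ((b ^ (q / p) - 1) * ((1 - b⁻¹)⁻¹) ^ (q / p)) =
      ENNReal.ofReal (b ^ (q / p) - 1) * ((1 - (ENNReal.ofReal b)⁻¹)⁻¹) ^ (q / p) := by
    rw [ENNReal.ofReal_mul (sub_nonneg.2 ha), ← ENNReal.ofReal_rpow_of_pos (inv_pos.2 h_gap),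
      ENNReal.ofReal_inv_of_pos h_gap, ENNReal.ofReal_sub _ (inv_pos.2 hb₀).le, ENNReal.ofReal_one,
      ENNReal.ofReal_inv_of_pos hb₀]
  rw [lorentzNorm_eq_lintegral_measure_lt μ f hp hq, one_div, ENNReal.rpow_inv_rpow hq.ne', h_const]
  refine (lintegral_measure_lt_rpow_le μ _ hb hr).trans ?_
  gcongr
  exact tsum_shell_le_lambdaSup_rpow μ p hf hq ha

end Comparison

theorem lambdaSup_le_lorentz_le_general {Ω : Type*} [MeasurableSpace Ω]
    (p q θ : ℝ) (hp : 0 < p) (hpq : p < q) (hθ : 1 + θ = q / p)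
    (μ : Measure Ω) (f : Ω → ℝ) (hf : AEMeasurable f μ) :
    LambdaSup μ p q f ≤ LorentzNorm μ p q f ∧
    LorentzNorm μ p q f ≤
      ENNReal.ofReal (((1 + θ) ^ (2 * (1 + θ)) * θ ^ (-θ)) ^ (1 / q)) *
        LambdaSup μ p q f := by
  refine ⟨lambdaSup_le_lorentzNorm μ f hp hpq.le, ?_⟩
  have hq : 0 < q := hp.trans hpq
  have h_ratio : 1 < 1 + θ := hθ ▸ (one_lt_div hp).2 hpq
  have hθ₀ : 0 < θ := lt_add_iff_pos_right 1 |>.1 h_ratio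
  have h_const : 0 ≤ (1 + θ) ^ (2 * (1 + θ)) * θ ^ (-θ) := by positivity
  rw [← ENNReal.rpow_le_rpow_iff hq, ENNReal.mul_rpow_of_nonneg _ _ hq.le, one_div,
    ENNReal.ofReal_rpow_of_nonneg (by positivity) hq.le, Real.rpow_inv_rpow h_const hq.ne']
  calc LorentzNorm μ p q f ^ q
      ≤ ENNReal.ofReal (((1 + θ) ^ (1 + θ) - 1) * ((1 - (1 + θ)⁻¹)⁻¹) ^ (1 + θ)) *
          LambdaSup μ p q f ^ q := by
        simpa only [← hθ] using lorentzNorm_rpow_le μ hf hp hpq.le h_ratio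
    _ ≤ ENNReal.ofReal ((1 + θ) ^ (2 * (1 + θ)) * θ ^ (-θ)) * LambdaSup μ p q f ^ q :=
        mul_le_mul_left (ENNReal.ofReal_le_ofReal (rpow_self_one_add_sub_one_mul_le hθ₀)) _

/-- For `0 < p < q < ∞` and a finite Borel measure `μ`,
`‖f‖_{Λ_{p,q}} ≤ ‖f‖_{L_{p,q}} ≤ ((1+θ)^{2(1+θ)} θ^{-θ})^{1/q} ‖f‖_{Λ_{p,q}}`
where `1 + θ = q/p`. -/
theorem lambdaSup_le_lorentz_le
    {Ω : Type*} [TopologicalSpace Ω] [CompactSpace Ω] [T2Space Ω]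
    [MeasurableSpace Ω] [BorelSpace Ω]
    (p q θ : ℝ) (hp : 0 < p) (hpq : p < q) (hθ : 1 + θ = q / p)
    (μ : Measure Ω) [IsFiniteMeasure μ]
    (f : Ω → ℝ) (hf : Measurable f) :
    LambdaSup μ p q f ≤ LorentzNorm μ p q f ∧
    LorentzNorm μ p q f ≤
      ENNReal.ofReal (((1 + θ) ^ (2 * (1 + θ)) * θ ^ (-θ)) ^ (1 / q)) *
        LambdaSup μ p q f := by
  exact lambdaSup_le_lorentz_le_general p q θ hp hpq hθ μ f hf.aemeasurable
end
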